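/- Let u be H-harmonic on B_n. Then u has a boundary distribution if and only if there exist constants C > 0 and A > 0 such that |u(x)| ≤ C(1-|x|)^{-A} for all x ∈ B_n. -/

import Mathlib

/-!
Both directions rest on the moments `M(r) = ∫ u(rζ) Φ(ζ) dσ(ζ)` of `u` on spheres. Integrating by
parts with the rotation fields `x_i ∂_j - x_j ∂_i` (`HH.integral_sphLap_mul`) shows that
H-harmonicity turns into a radial equation for moments, of the form
`(radA · M')' = radW · M_L`, where `M_L` is the moment with the spherical Laplacian of `-Φ` in place
of `Φ` (`HH.hasDerivAt_radA_mom1`).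

*Growth implies a boundary distribution* (`HH.hasBoundaryDistribution_of_growth`). If every moment
is `O((1-r)^{-a})`, this applies to `M_L` as well, and integrating the radial equation twice
improves the exponent for `M`. After finitely many steps `M'` is bounded up to `r = 1`, so `M`
has a limit.

*A boundary distribution implies growth* (`HH.growth_of_hasBoundaryDistribution`).
* If `Φ` is an eigenfunction of the spherical Laplacian, `M` is, up to a constant, the unique
  solution of the radial equation that is regular at `0` (`HH.IsRad.unique`). The same holds for the
  Poisson kernel `x ↦ P_h(x, ζ)`, so `M(s)` is the boundary pairing of `u` with the Poisson
  extension of `Φ` (`HH.rep_eigen`). Polynomials in `⟨ξ, ·⟩` are sums of such eigenfunctions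
  (`HH.mem_span_eig`), and by Weierstrass approximation and Fubini a bound `B` for
  `|∫ u(rζ) P_h(sη, ζ) dσ(ζ)|`, for `r` near `1` and uniform in `η`, gives `|u(sξ)| ≤ B`
  (`HH.pointwise_bound`).
* The zonal moments `∫ u(rζ)⟨ξ, ζ⟩^m dσ(ζ)` are `≤ K (1+m)^K` for `r` near `1`, uniformly in `ξ`
  and `m` (`HH.moment_growth`). Otherwise bad triples `(ξ_k, m_k, r_k)` could be combined into
  smooth test functions `∑ a_k (1+m_k)^{-k} ⟨ξ_k, ·⟩^{m_k}`, `a ∈ ℓ¹`, and the pairings with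
  `u(r_k ·)` would be pointwise bounded functionals on `ℓ¹` with unbounded norms, contrary to the
  Banach–Steinhaus theorem.
* Expanding `P_h(sη, ζ)` as a power series in `⟨η, ζ⟩` gives a bound `B` that is a constant times a
  power of `1/(1-s)` (`HH.pairing_bound`).
-/

open MeasureTheory Metric Filter Topology Set
open scoped ContDiff ENNReal NNReal

noncomputable section

/-- `E n` is the Euclidean space `ℝⁿ`. -/
abbrev E (n : ℕ) := EuclideanSpace ℝ (Fin n)

/-- The normalized surface measure `σ` on the unit sphere `S^{n-1}` (total mass `1`). -/
noncomputable def sphMeasure (n : ℕ) : Measure (E n) :=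
  ((μH[(n : ℝ) - 1] (sphere (0 : E n) 1))⁻¹) • ((μH[(n : ℝ) - 1]).restrict (sphere (0 : E n) 1))

/-- The Euclidean Laplacian `Δu(x) = Σ ∂²u/∂x_i²`. -/
noncomputable def lap (n : ℕ) (u : E n → ℝ) (x : E n) : ℝ :=
  ∑ i : Fin n, fderiv ℝ (fun y => fderiv ℝ u y (EuclideanSpace.single i 1)) x (EuclideanSpace.single i 1)

/-- The normal derivation operator `Nu(x) = Σ x_i ∂u/∂x_i(x)`, i.e. the derivative of `u`
at `x` in the direction `x`. -/
noncomputable def Nder (n : ℕ) (u : E n → ℝ) (x : E n) : ℝ := fderiv ℝ u x x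

/-- `u` is `H`-harmonic on `B_n` :
`Du(x) = (1-|x|²)²Δu(x) + 2(n-2)(1-|x|²)Nu(x) = 0` on the unit ball. -/
def HHarmonic (n : ℕ) (u : E n → ℝ) : Prop :=
  ∀ x ∈ ball (0 : E n) 1,
    (1 - ‖x‖ ^ 2) ^ 2 * lap n u x + 2 * ((n : ℝ) - 2) * (1 - ‖x‖ ^ 2) * Nder n u x = 0

/-- The hyperbolic Poisson kernel `P_h(x,ξ) = ((1-|x|²)/|x-ξ|²)^{n-1}`. -/
noncomputable def Ph (n : ℕ) (x ξ : E n) : ℝ := ((1 - ‖x‖ ^ 2) / ‖x - ξ‖ ^ 2) ^ (n - 1)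

/-- The Euclidean Poisson kernel `P_e(x,ξ) = (1-|x|²)/|x-ξ|ⁿ`. -/
noncomputable def Pe (n : ℕ) (x ξ : E n) : ℝ := (1 - ‖x‖ ^ 2) / ‖x - ξ‖ ^ n

/-- `u` has a boundary distribution : for every smooth `Φ` on the sphere,
`∫ u(rζ)Φ(ζ)dσ(ζ)` has a finite limit as `r → 1⁻`. -/
def HasBoundaryDistribution (n : ℕ) (u : E n → ℝ) : Prop :=
  ∀ Φ : E n → ℝ, ContDiff ℝ ∞ Φ →
    ∃ L : ℝ, Tendsto (fun r : ℝ => ∫ ζ, u (r • ζ) * Φ ζ ∂(sphMeasure n)) (𝓝[<] (1 : ℝ)) (𝓝 L)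

namespace HH

/-! ### The normalized surface measure -/

lemma lipschitzOnWith_normalize {F : Type*} [NormedAddCommGroup F] [NormedSpace ℝ F] :
    LipschitzOnWith 2 (fun y : F => ‖y‖⁻¹ • y) {y | 1 ≤ ‖y‖} := by
  refine LipschitzOnWith.of_dist_le_mul fun y hy z hz => ?_
  simp only [mem_ofPred_eq] at hy hz
  rw [dist_eq_norm, dist_eq_norm]
  have hy0 : 0 < ‖y‖ := by linarith
  have hz0 : 0 < ‖z‖ := by linarith
  have : ‖y‖⁻¹ • y - ‖z‖⁻¹ • z = ‖y‖⁻¹ • (y - z) + (‖y‖⁻¹ - ‖z‖⁻¹) • z := by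
    rw [smul_sub, sub_smul]; abel
  rw [this]
  refine (norm_add_le _ _).trans ?_
  rw [norm_smul, norm_smul, norm_inv, norm_norm]
  have h1 : ‖y‖⁻¹ * ‖y - z‖ ≤ ‖y - z‖ := by
    have := inv_le_one_of_one_le₀ hy
    nlinarith [norm_nonneg (y - z)]
  have h2 : ‖‖y‖⁻¹ - ‖z‖⁻¹‖ * ‖z‖ ≤ ‖y - z‖ := by
    have e : (‖y‖⁻¹ - ‖z‖⁻¹) * ‖z‖ = ‖y‖⁻¹ * (‖z‖ - ‖y‖) := by field_simp
    calc ‖‖y‖⁻¹ - ‖z‖⁻¹‖ * ‖z‖ = ‖(‖y‖⁻¹ - ‖z‖⁻¹) * ‖z‖‖ := by rw [norm_mul, norm_norm]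
      _ = ‖y‖⁻¹ * |‖z‖ - ‖y‖| := by rw [e, norm_mul, norm_inv, norm_norm, Real.norm_eq_abs]
      _ ≤ 1 * ‖y - z‖ := by
        gcongr
        · exact inv_le_one_of_one_le₀ hy
        · rw [norm_sub_rev]; exact abs_norm_sub_norm_le z y
      _ = _ := one_mul _
  push_cast
  linarith

/-- The sphere is covered by the radial projections of the faces of the cube, which are Lipschitz
images of boxes. -/
lemma hausdorff_sphere_lt_top (m : ℕ) : μH[(m : ℝ)] (sphere (0 : E (m + 1)) 1) < ⊤ := by
  let Q : ℝ × Fin (m + 1) → (Fin m → ℝ) → E (m + 1) :=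
    fun p y => WithLp.toLp 2 (p.2.insertNth p.1 y)
  let ν : E (m + 1) → E (m + 1) := fun y => ‖y‖⁻¹ • y
  let box : Set (Fin m → ℝ) := closedBall 0 1
  have hsub : sphere (0 : E (m + 1)) 1 ⊆
      ⋃ p ∈ (({1, -1} : Finset ℝ) ×ˢ (Finset.univ : Finset (Fin (m + 1)))), (ν ∘ Q p) '' box := by
    intro x hx
    rw [mem_sphere_zero_iff_norm] at hx
    obtain ⟨i, -, hi⟩ := Finset.exists_max_image (Finset.univ : Finset (Fin (m + 1)))
      (fun i => |x i|) Finset.univ_nonempty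
    have hc : 0 < |x i| := by
      by_contra hcon
      have h0 : x = 0 := by
        ext j
        have := hi j (Finset.mem_univ _)
        have h1 : |x j| ≤ 0 := by linarith
        simpa using h1
      rw [h0, norm_zero] at hx
      norm_num at hx
    have hxi : x i ≠ 0 := abs_pos.1 hc
    simp only [mem_iUnion]
    refine ⟨(x i / |x i|, i), ?_, fun j => x (i.succAbove j) / |x i|, ?_, ?_⟩
    · rcases lt_or_gt_of_ne hxi with h | h
      · simp [abs_of_neg h, div_neg, div_self hxi]
      · simp [abs_of_pos h, div_self hxi]
    · simp only [box, mem_closedBall_zero_iff]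
      rw [pi_norm_le_iff_of_nonneg zero_le_one]
      intro j
      rw [norm_div, Real.norm_eq_abs, Real.norm_eq_abs, abs_abs, div_le_one hc]
      exact hi _ (Finset.mem_univ _)
    · have hQ : Q (x i / |x i|, i) (fun j => x (i.succAbove j) / |x i|) = |x i|⁻¹ • x := by
        ext j
        refine Fin.succAboveCases i ?_ (fun k => ?_) j
        · simp [Q, div_eq_inv_mul]
        · simp [Q, div_eq_inv_mul]
      simp only [Function.comp, hQ, ν, norm_smul, norm_inv, Real.norm_eq_abs, abs_abs, hx, smul_smul]
      have : (|x i|⁻¹ * 1)⁻¹ * |x i|⁻¹ = 1 := by field_simp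
      rw [this, one_smul]
  refine (measure_mono hsub).trans_lt ?_
  refine measure_biUnion_lt_top (Finset.finite_toSet _) ?_
  rintro ⟨ε, i⟩ hp
  have hε : |ε| = 1 := by
    simp only [Finset.coe_product, mem_prod] at hp
    have := hp.1
    simp at this
    rcases this with h | h <;> simp [h]
  have hQl : ∃ K, LipschitzWith K (Q (ε, i)) := by
    refine ⟨_, (PiLp.lipschitzWith_toLp 2 _).comp (Kg := 1) ?_⟩
    refine LipschitzWith.of_dist_le_mul fun y z => ?_
    rw [Fin.dist_insertNth_insertNth]
    simp
  obtain ⟨K, hK⟩ := hQl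
  have hmap : MapsTo (Q (ε, i)) box {y | 1 ≤ ‖y‖} := by
    intro y _
    have := PiLp.norm_apply_le (Q (ε, i) y) i
    have h2 : (Q (ε, i) y) i = ε := by simp [Q]
    rw [h2, Real.norm_eq_abs, hε] at this
    exact this
  have hL := (lipschitzOnWith_normalize (F := E (m + 1))).comp (hK.lipschitzOnWith (s := box)) hmap
  refine (hL.hausdorffMeasure_image_le (d := (m : ℝ)) (by positivity)).trans_lt ?_
  refine ENNReal.mul_lt_top ?_ ?_
  · exact ENNReal.rpow_lt_top_of_nonneg (by positivity) ENNReal.coe_ne_top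
  · have := hausdorffMeasure_pi_real (ι := Fin m)
    rw [Fintype.card_fin] at this
    rw [this]
    exact measure_closedBall_lt_top

/-- Forgetting the first coordinate is a 1-Lipschitz map, and it sends the sphere onto a set of
positive Lebesgue measure. -/
lemma hausdorff_sphere_pos (m : ℕ) : μH[(m : ℝ)] (sphere (0 : E (m + 1)) 1) ≠ 0 := by
  let π : E (m + 1) → (Fin m → ℝ) := fun x j => x j.succ
  have hπ : LipschitzWith 1 π := by
    refine LipschitzWith.of_dist_le_mul fun y z => ?_
    rw [NNReal.coe_one, one_mul]
    refine (dist_pi_le_iff dist_nonneg).2 fun j => ?_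
    rw [dist_eq_norm, dist_eq_norm]
    exact PiLp.norm_apply_le (y - z) j.succ
  let U : Set (Fin m → ℝ) := {y | ∑ j, y j ^ 2 < 1}
  have hU : IsOpen U := by
    apply isOpen_lt <;> fun_prop
  have hUne : U.Nonempty := ⟨0, by simp [U]⟩
  have hsub : U ⊆ π '' sphere (0 : E (m + 1)) 1 := by
    intro y hy
    simp only [U, mem_ofPred_eq] at hy
    refine ⟨WithLp.toLp 2 (Fin.cons (Real.sqrt (1 - ∑ j, y j ^ 2)) y), ?_, ?_⟩
    · rw [mem_sphere_zero_iff_norm, EuclideanSpace.norm_eq, Fin.sum_univ_succ]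
      simp only [Fin.cons_zero, Fin.cons_succ, Real.norm_eq_abs, sq_abs]
      rw [Real.sq_sqrt (by linarith)]
      simp
    · ext j; simp [π]
  intro h0
  have h1 := hπ.hausdorffMeasure_image_le (d := (m : ℝ)) (by positivity) (sphere (0 : E (m + 1)) 1)
  rw [h0, mul_zero] at h1
  have h2 : μH[(m : ℝ)] U = 0 := le_antisymm ((measure_mono hsub).trans h1) (zero_le)
  have := hausdorffMeasure_pi_real (ι := Fin m)
  rw [Fintype.card_fin] at this
  rw [this] at h2
  exact (hU.measure_pos volume hUne).ne' h2

lemma isProbabilityMeasure_sph {n : ℕ} (hn : 3 ≤ n) : IsProbabilityMeasure (sphMeasure n) := by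
  obtain ⟨m, rfl⟩ : ∃ m, n = m + 1 := ⟨n - 1, by omega⟩
  have e : ((m + 1 : ℕ) : ℝ) - 1 = m := by push_cast; ring
  refine ⟨?_⟩
  rw [sphMeasure, e]
  simp only [Measure.smul_apply, Measure.restrict_apply_univ, smul_eq_mul]
  exact ENNReal.inv_mul_cancel (hausdorff_sphere_pos m) (hausdorff_sphere_lt_top m).ne

lemma ae_sph (n : ℕ) : ∀ᵐ ζ ∂(sphMeasure n), ζ ∈ sphere (0 : E n) 1 := by
  rw [sphMeasure]
  exact Measure.ae_smul_measure (ae_restrict_mem isClosed_sphere.measurableSet) _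

lemma restrict_sph (n : ℕ) : (sphMeasure n).restrict (sphere (0 : E n) 1) = sphMeasure n :=
  Measure.restrict_eq_self_of_ae_mem (ae_sph n)

lemma measurePreserving_sph {n : ℕ} (g : E n ≃ₗᵢ[ℝ] E n) :
    MeasurePreserving g (sphMeasure n) (sphMeasure n) := by
  have h := (g.toIsometryEquiv.measurePreserving_hausdorffMeasure ((n : ℝ) - 1)).restrict_preimage
    (isClosed_sphere (x := (0 : E n)) (ε := 1)).measurableSet
  have hpre : g.toIsometryEquiv ⁻¹' sphere (0 : E n) 1 = sphere (0 : E n) 1 := by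
    ext x; simp
  rw [hpre] at h
  exact h.smul_measure _

lemma integral_comp_sph {n : ℕ} (g : E n ≃ₗᵢ[ℝ] E n) (f : E n → ℝ) :
    ∫ ζ, f (g ζ) ∂(sphMeasure n) = ∫ ζ, f ζ ∂(sphMeasure n) :=
  (measurePreserving_sph g).integral_comp g.toHomeomorph.measurableEmbedding f

lemma integrable_sph {n : ℕ} (hn : 3 ≤ n) {f : E n → ℝ} (hf : ContinuousOn f (sphere 0 1)) :
    Integrable f (sphMeasure n) := by
  have := isProbabilityMeasure_sph hn
  have := hf.integrableOn_compact (μ := sphMeasure n) (isCompact_sphere _ _)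
  rwa [IntegrableOn, restrict_sph] at this

lemma aesm_sph {n : ℕ} {f : E n → ℝ} (hf : ContinuousOn f (sphere 0 1)) :
    AEStronglyMeasurable f (sphMeasure n) := by
  have := hf.aestronglyMeasurable (μ := sphMeasure n) isClosed_sphere.measurableSet
  rwa [restrict_sph] at this

lemma integral_congr_sph {n : ℕ} {f g : E n → ℝ} (h : ∀ ζ ∈ sphere (0 : E n) 1, f ζ = g ζ) :
    ∫ ζ, f ζ ∂(sphMeasure n) = ∫ ζ, g ζ ∂(sphMeasure n) :=
  integral_congr_ae ((ae_sph n).mono h)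

lemma integral_mono_sph {n : ℕ} (hn : 3 ≤ n) {f g : E n → ℝ} (hf : ContinuousOn f (sphere 0 1))
    (hg : ContinuousOn g (sphere 0 1))
    (h : ∀ ζ ∈ sphere (0 : E n) 1, f ζ ≤ g ζ) :
    ∫ ζ, f ζ ∂(sphMeasure n) ≤ ∫ ζ, g ζ ∂(sphMeasure n) :=
  integral_mono_ae (integrable_sph hn hf) (integrable_sph hn hg) ((ae_sph n).mono h)

lemma abs_integral_sph_le {n : ℕ} (hn : 3 ≤ n) {f : E n → ℝ} {C : ℝ}
    (h : ∀ ζ ∈ sphere (0 : E n) 1, |f ζ| ≤ C) :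
    |∫ ζ, f ζ ∂(sphMeasure n)| ≤ C := by
  have := isProbabilityMeasure_sph hn
  have := norm_integral_le_of_norm_le_const (μ := sphMeasure n) (f := f) ((ae_sph n).mono h)
  simpa using this

/-- Differentiation under the integral sign over the sphere. -/
lemma hasDerivAt_integral_sph {n : ℕ} (hn : 3 ≤ n) {a b : ℝ} {h h' : ℝ → E n → ℝ}
    (hc : ∀ t ∈ Ioo a b, ContinuousOn (h t) (sphere 0 1))
    (hc' : ContinuousOn (fun p : ℝ × E n => h' p.1 p.2) (Ioo a b ×ˢ sphere 0 1))
    (hd : ∀ t ∈ Ioo a b, ∀ ζ ∈ sphere (0 : E n) 1, HasDerivAt (fun t => h t ζ) (h' t ζ) t)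
    {t₀ : ℝ} (ht₀ : t₀ ∈ Ioo a b) :
    HasDerivAt (fun t => ∫ ζ, h t ζ ∂(sphMeasure n)) (∫ ζ, h' t₀ ζ ∂(sphMeasure n)) t₀ := by
  have := isProbabilityMeasure_sph hn
  obtain ⟨ε, hε, hsub⟩ := Metric.nhds_basis_closedBall.mem_iff.1 (Ioo_mem_nhds ht₀.1 ht₀.2)
  have hcomp : IsCompact (closedBall t₀ ε ×ˢ sphere (0 : E n) 1) :=
    (isCompact_closedBall _ _).prod (isCompact_sphere _ _)
  obtain ⟨C, hC⟩ := hcomp.exists_bound_of_continuousOn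
    (hc'.mono (prod_mono hsub subset_rfl))
  have hslice : ∀ t ∈ Ioo a b, ContinuousOn (h' t) (sphere 0 1) := fun t ht =>
    hc'.comp (f := fun ζ => (t, ζ)) (by fun_prop) (fun ζ hζ => ⟨ht, hζ⟩)
  refine (hasDerivAt_integral_of_dominated_loc_of_deriv_le (F := h) (F' := h')
    (bound := fun _ => C) (closedBall_mem_nhds t₀ hε) ?_ (integrable_sph hn (hc t₀ ht₀))
    (aesm_sph (hslice t₀ ht₀)) ?_ (integrable_const C) ?_).2
  · filter_upwards [Ioo_mem_nhds ht₀.1 ht₀.2] with t ht using aesm_sph (hc t ht)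
  · filter_upwards [ae_sph n] with ζ hζ t ht using hC (t, ζ) ⟨ht, hζ⟩
  · filter_upwards [ae_sph n] with ζ hζ t ht using hd t (hsub ht) ζ hζ

/-! ### Rotation fields and the spherical Laplacian -/

/-- The `i`-th standard basis vector of `ℝⁿ`. -/
def bv {n : ℕ} (i : Fin n) : E n := EuclideanSpace.single i 1

lemma bv_apply {n : ℕ} (i k : Fin n) : (bv i : E n) k = if k = i then 1 else 0 := by
  simp [bv]

/-- The infinitesimal rotation `x ↦ x_i e_j - x_j e_i` in the coordinate plane `(i, j)`. -/
def rotGen {n : ℕ} (i j : Fin n) : E n →L[ℝ] E n :=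
  (EuclideanSpace.proj (𝕜 := ℝ) i : E n →L[ℝ] ℝ).smulRight (bv j) -
    (EuclideanSpace.proj (𝕜 := ℝ) j : E n →L[ℝ] ℝ).smulRight (bv i)

lemma rotGen_apply {n : ℕ} (i j : Fin n) (x : E n) :
    rotGen i j x = x i • bv j - x j • bv i := by
  simp [rotGen]

/-- The linear map rotating by the angle `θ` in the coordinate plane `(i, j)`. -/
def rotLin {n : ℕ} (i j : Fin n) (θ : ℝ) : E n →ₗ[ℝ] E n where
  toFun x := x + (Real.cos θ - 1) • (x i • bv i + x j • bv j) + Real.sin θ • rotGen i j x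
  map_add' x y := by
    simp only [map_add, PiLp.add_apply]; module
  map_smul' c x := by
    simp only [map_smul, PiLp.smul_apply, smul_eq_mul, RingHom.id_apply]; module

lemma rotLin_apply {n : ℕ} (i j : Fin n) (θ : ℝ) (x : E n) : rotLin i j θ x =
    x + (Real.cos θ - 1) • (x i • bv i + x j • bv j) + Real.sin θ • rotGen i j x := rfl

lemma norm_rotLin {n : ℕ} {i j : Fin n} (hij : i ≠ j) (θ : ℝ) (x : E n) :
    ‖rotLin i j θ x‖ = ‖x‖ := by
  have h2 : ‖rotLin i j θ x‖ ^ 2 = ‖x‖ ^ 2 := by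
    rw [EuclideanSpace.real_norm_sq_eq, EuclideanSpace.real_norm_sq_eq, ← sub_eq_zero,
      ← Finset.sum_sub_distrib, Fintype.sum_eq_add i j hij]
    · simp [rotLin_apply, rotGen_apply, bv_apply, hij, hij.symm]
      linear_combination (x i ^ 2 + x j ^ 2) * (Real.sin_sq_add_cos_sq θ)
    · rintro k ⟨h1, h2⟩
      simp [rotLin_apply, rotGen_apply, bv_apply, h1, h2]
  exact (sq_eq_sq₀ (norm_nonneg _) (norm_nonneg _)).1 h2

/-- The rotation by the angle `θ` in the coordinate plane `(i, j)`, as a linear isometry. -/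
def rot {n : ℕ} {i j : Fin n} (hij : i ≠ j) (θ : ℝ) : E n ≃ₗᵢ[ℝ] E n :=
  LinearIsometry.toLinearIsometryEquiv ⟨rotLin i j θ, norm_rotLin hij θ⟩ rfl

lemma rot_apply {n : ℕ} {i j : Fin n} (hij : i ≠ j) (θ : ℝ) (x : E n) : rot hij θ x =
    x + (Real.cos θ - 1) • (x i • bv i + x j • bv j) + Real.sin θ • rotGen i j x := by
  simp [rot, rotLin_apply]

/-- The derivative of `f` along the rotation field of the coordinate plane `(i, j)`. -/
def Lder {n : ℕ} (i j : Fin n) (f : E n → ℝ) (x : E n) : ℝ := fderiv ℝ f x (rotGen i j x)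

lemma contDiffAt_Lder {n : ℕ} (i j : Fin n) {f : E n → ℝ} {x : E n} {k l : ℕ∞ω}
    (hf : ContDiffAt ℝ k f x) (hkl : l + 1 ≤ k) : ContDiffAt ℝ l (Lder i j f) x :=
  (hf.fderiv_right hkl).clm_apply (rotGen i j).contDiff.contDiffAt

/-- A rotation field annihilates the surface measure, which is invariant under rotations. -/
lemma integral_Lder {n : ℕ} (hn : 3 ≤ n) (i j : Fin n) {f : E n → ℝ}
    (hf : ∀ ζ ∈ sphere (0 : E n) 1, ContDiffAt ℝ 1 f ζ) :
    ∫ ζ, Lder i j f ζ ∂(sphMeasure n) = 0 := by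
  by_cases hij : i = j
  · subst hij
    simp [Lder, rotGen_apply]
  have hmem : ∀ t : ℝ, ∀ ζ ∈ sphere (0 : E n) 1, rot hij t ζ ∈ sphere (0 : E n) 1 := by
    intro t ζ hζ
    rw [mem_sphere_zero_iff_norm] at hζ ⊢
    rw [LinearIsometryEquiv.norm_map, hζ]
  have hcoord : ∀ k : Fin n, Continuous fun x : E n => x k := fun k => by fun_prop
  have hjoint : Continuous fun p : ℝ × E n => rot hij p.1 p.2 := by
    simp only [rot_apply]
    have h1 := (hcoord i).comp (continuous_snd (X := ℝ))
    have h2 := (hcoord j).comp (continuous_snd (X := ℝ))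
    simp only [Function.comp_def] at h1 h2
    fun_prop
  let R' : ℝ × E n → E n := fun p =>
    (-Real.sin p.1) • (p.2 i • bv i + p.2 j • bv j) + Real.cos p.1 • rotGen i j p.2
  have hR' : Continuous R' := by
    have h1 := (hcoord i).comp (continuous_snd (X := ℝ))
    have h2 := (hcoord j).comp (continuous_snd (X := ℝ))
    simp only [Function.comp_def] at h1 h2
    simp only [R']
    fun_prop
  have key := hasDerivAt_integral_sph hn (a := -1) (b := 1) (t₀ := 0)
    (h := fun t ζ => f (rot hij t ζ)) (h' := fun t ζ => fderiv ℝ f (rot hij t ζ) (R' (t, ζ)))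
    ?_ ?_ ?_ (by norm_num)
  · have h1 : (fun t : ℝ => ∫ ζ, f (rot hij t ζ) ∂(sphMeasure n)) =
        fun _ => ∫ ζ, f ζ ∂(sphMeasure n) := by
      ext t
      exact integral_comp_sph (rot hij t) f
    rw [h1] at key
    have h2 := key.unique (hasDerivAt_const _ _)
    rw [← h2]
    refine integral_congr_sph fun ζ _ => ?_
    simp [Lder, R', rot_apply]
  · intro t _ ζ hζ
    have := (hf _ (hmem t ζ hζ)).continuousAt
    exact (this.comp (f := fun ζ => rot hij t ζ) (rot hij t).continuous.continuousAt).continuousWithinAt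
  · rintro ⟨t, ζ⟩ ⟨_, hζ⟩
    have := ((hf _ (hmem t ζ hζ)).fderiv_right (m := 0) (by norm_num)).continuousAt
    have h3 := this.comp (f := fun p : ℝ × E n => rot hij p.1 p.2) (x := (t, ζ)) hjoint.continuousAt
    exact (h3.clm_apply hR'.continuousAt).continuousWithinAt
  · intro t _ ζ hζ
    have h1 := ((hf _ (hmem t ζ hζ)).differentiableAt (by norm_num)).hasFDerivAt
    have h2 : HasDerivAt (fun t => rot hij t ζ) (R' (t, ζ)) t := by
      simp only [rot_apply, R']
      have := ((((Real.hasDerivAt_cos t).sub_const 1).smul_const (ζ i • bv i + ζ j • bv j)).const_add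
        ζ).add ((Real.hasDerivAt_sin t).smul_const (rotGen i j ζ))
      exact this
    exact h1.comp_hasDerivAt t h2

lemma integral_Lder_mul {n : ℕ} (hn : 3 ≤ n) (i j : Fin n) {f g : E n → ℝ}
    (hf : ∀ ζ ∈ sphere (0 : E n) 1, ContDiffAt ℝ 1 f ζ)
    (hg : ∀ ζ ∈ sphere (0 : E n) 1, ContDiffAt ℝ 1 g ζ) :
    ∫ ζ, Lder i j f ζ * g ζ ∂(sphMeasure n) = - ∫ ζ, f ζ * Lder i j g ζ ∂(sphMeasure n) := by
  have h := integral_Lder hn i j (fun ζ hζ => (hf ζ hζ).mul (hg ζ hζ))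
  have hLc : ∀ {f : E n → ℝ}, (∀ ζ ∈ sphere (0 : E n) 1, ContDiffAt ℝ 1 f ζ) →
      ContinuousOn (Lder i j f) (sphere 0 1) := fun hf ζ hζ =>
    (contDiffAt_Lder (l := 0) i j (hf ζ hζ) (by norm_num)).continuousAt.continuousWithinAt
  have hc : ∀ {f : E n → ℝ}, (∀ ζ ∈ sphere (0 : E n) 1, ContDiffAt ℝ 1 f ζ) →
      ContinuousOn f (sphere 0 1) := fun hf ζ hζ => (hf ζ hζ).continuousAt.continuousWithinAt
  rw [eq_neg_iff_add_eq_zero, ← integral_add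
    (integrable_sph hn (f := fun ζ => Lder i j f ζ * g ζ) ((hLc hf).mul (hc hg)))
    (integrable_sph hn (f := fun ζ => f ζ * Lder i j g ζ) ((hc hf).mul (hLc hg))), ← h]
  refine integral_congr_sph fun ζ hζ => ?_
  have h1 := (hf ζ hζ).differentiableAt (by norm_num)
  have h2 := (hg ζ hζ).differentiableAt (by norm_num)
  simp only [Lder]
  rw [fderiv_fun_mul h1 h2]
  simp
  ring

/-- The spherical Laplacian, written with the rotation fields: `½ ∑_{i,j} L_{ij}²`. -/
def sphLap {n : ℕ} (f : E n → ℝ) (x : E n) : ℝ :=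
  (1 / 2) * ∑ i : Fin n, ∑ j : Fin n, Lder i j (Lder i j f) x

lemma contDiffAt_sphLap {n : ℕ} {f : E n → ℝ} {x : E n} {l k : ℕ∞ω}
    (hf : ContDiffAt ℝ k f x) (hkl : (l + 1) + 1 ≤ k) : ContDiffAt ℝ l (sphLap f) x := by
  refine contDiffAt_const.mul (ContDiffAt.sum fun i _ => ContDiffAt.sum fun j _ => ?_)
  exact contDiffAt_Lder i j (contDiffAt_Lder i j hf hkl) le_rfl

lemma contDiff_sphLap {n : ℕ} {f : E n → ℝ} (hf : ContDiff ℝ ∞ f) : ContDiff ℝ ∞ (sphLap f) :=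
  contDiff_iff_contDiffAt.2 fun _ => contDiffAt_sphLap hf.contDiffAt (by rfl)

/-- The spherical Laplacian is symmetric. -/
lemma integral_sphLap_mul {n : ℕ} (hn : 3 ≤ n) {f g : E n → ℝ}
    (hf : ∀ ζ ∈ sphere (0 : E n) 1, ContDiffAt ℝ 2 f ζ)
    (hg : ∀ ζ ∈ sphere (0 : E n) 1, ContDiffAt ℝ 2 g ζ) :
    ∫ ζ, sphLap f ζ * g ζ ∂(sphMeasure n) = ∫ ζ, f ζ * sphLap g ζ ∂(sphMeasure n) := by
  have h12 : (1 : ℕ∞ω) + 1 ≤ 2 := by norm_num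
  have h1 : ∀ {f : E n → ℝ}, (∀ ζ ∈ sphere (0 : E n) 1, ContDiffAt ℝ 2 f ζ) → ∀ i j,
      ∀ ζ ∈ sphere (0 : E n) 1, ContDiffAt ℝ 1 (Lder i j f) ζ := fun hf i j ζ hζ =>
    contDiffAt_Lder i j (hf ζ hζ) h12
  have h0 : ∀ {f : E n → ℝ}, (∀ ζ ∈ sphere (0 : E n) 1, ContDiffAt ℝ 2 f ζ) → ∀ i j,
      ContinuousOn (Lder i j (Lder i j f)) (sphere 0 1) := fun hf i j ζ hζ =>
    (contDiffAt_Lder (l := 0) i j (h1 hf i j ζ hζ) (by norm_num)).continuousAt.continuousWithinAt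
  have hc : ∀ {f : E n → ℝ}, (∀ ζ ∈ sphere (0 : E n) 1, ContDiffAt ℝ 2 f ζ) →
      ContinuousOn f (sphere 0 1) := fun hf ζ hζ => (hf ζ hζ).continuousAt.continuousWithinAt
  have hfg : ∀ i j, ∫ ζ, Lder i j (Lder i j f) ζ * g ζ ∂(sphMeasure n) =
      ∫ ζ, f ζ * Lder i j (Lder i j g) ζ ∂(sphMeasure n) := by
    intro i j
    rw [integral_Lder_mul hn i j (h1 hf i j) (fun ζ hζ => (hg ζ hζ).of_le (by norm_num)),
      integral_Lder_mul hn i j (fun ζ hζ => (hf ζ hζ).of_le (by norm_num)) (h1 hg i j), neg_neg]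
  have e1 : ∀ ζ, sphLap f ζ * g ζ =
      (1 / 2) * ∑ i : Fin n, ∑ j : Fin n, Lder i j (Lder i j f) ζ * g ζ := by
    intro ζ; simp only [sphLap, mul_assoc, Finset.sum_mul]
  have e2 : ∀ ζ, f ζ * sphLap g ζ =
      (1 / 2) * ∑ i : Fin n, ∑ j : Fin n, f ζ * Lder i j (Lder i j g) ζ := by
    intro ζ; simp only [sphLap, Finset.mul_sum]
    exact Finset.sum_congr rfl fun i _ => Finset.sum_congr rfl fun j _ => by ring
  simp only [e1, e2]
  rw [integral_const_mul, integral_const_mul, integral_finsetSum, integral_finsetSum]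
  · congr 1
    refine Finset.sum_congr rfl fun i _ => ?_
    rw [integral_finsetSum, integral_finsetSum]
    · exact Finset.sum_congr rfl fun j _ => hfg i j
    · exact fun j _ => integrable_sph hn ((hc hf).mul (h0 hg i j))
    · exact fun j _ => integrable_sph hn ((h0 hf i j).mul (hc hg))
  · exact fun i _ => integrable_finsetSum _ fun j _ => integrable_sph hn ((hc hf).mul (h0 hg i j))
  · exact fun i _ => integrable_finsetSum _ fun j _ => integrable_sph hn ((h0 hf i j).mul (hc hg))

lemma sum_bv {n : ℕ} (x : E n) : ∑ i, x i • (bv i : E n) = x := by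
  ext k
  simp [bv_apply]

lemma lap_eq {n : ℕ} {f : E n → ℝ} {x : E n} (hf : ContDiffAt ℝ 2 f x) :
    lap n f x = ∑ i, fderiv ℝ (fderiv ℝ f) x (bv i) (bv i) := by
  have h := (hf.fderiv_right (m := 1) (by norm_num)).differentiableAt (by norm_num)
  refine Finset.sum_congr rfl fun i _ => ?_
  rw [fderiv_clm_apply h (differentiableAt_const _)]
  simp [bv]

/-- The Laplacian in polar coordinates. -/
lemma sphLap_eq {n : ℕ} {f : E n → ℝ} {x : E n} (hf : ContDiffAt ℝ 2 f x) :
    sphLap f x = ‖x‖ ^ 2 * lap n f x - fderiv ℝ (fderiv ℝ f) x x x -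
      ((n : ℝ) - 1) * fderiv ℝ f x x := by
  have h := (hf.fderiv_right (m := 1) (by norm_num)).differentiableAt (by norm_num)
  set B := fderiv ℝ (fderiv ℝ f) x with hB
  set l := fderiv ℝ f x with hl
  have hL : ∀ i j, Lder i j (Lder i j f) x =
      B (rotGen i j x) (rotGen i j x) + l (rotGen i j (rotGen i j x)) := by
    intro i j
    have : fderiv ℝ (Lder i j f) x = _ := fderiv_clm_apply h (rotGen i j).differentiableAt
    rw [Lder, this]
    simp [← hB, ← hl, add_comm]
  have hx2 : ∑ i, x i ^ 2 = ‖x‖ ^ 2 := (EuclideanSpace.real_norm_sq_eq x).symm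
  have hlx : l x = ∑ i, x i * l (bv i) := by
    conv_lhs => rw [← sum_bv x]
    simp
  have hBx : B x x = ∑ i, ∑ j, x i * x j * B (bv i) (bv j) := by
    conv_lhs => rw [← sum_bv x]
    simp only [map_sum, map_smul, _root_.sum_apply, _root_.smul_apply,
      smul_eq_mul, Finset.mul_sum]
    rw [Finset.sum_comm]
    exact Finset.sum_congr rfl fun i _ => Finset.sum_congr rfl fun j _ => by ring
  have hsq : ∀ i j, rotGen i j (rotGen i j x) =
      -(x j • bv j + x i • bv i) + (if i = j then (1 : ℝ) else 0) • (x i • bv j + x j • bv i) := by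
    intro i j
    by_cases hij : i = j
    · subst hij; simp [rotGen_apply]
    · simp [rotGen_apply, bv_apply, hij, Ne.symm hij]; abel
  have hterm : ∀ i j, Lder i j (Lder i j f) x =
      x i ^ 2 * B (bv j) (bv j) + x j ^ 2 * B (bv i) (bv i) - x i * x j * B (bv i) (bv j)
        - x j * x i * B (bv j) (bv i) - x j * l (bv j) - x i * l (bv i)
        + (if i = j then (x i * l (bv j) + x j * l (bv i)) else 0) := by
    intro i j
    rw [hL, hsq, rotGen_apply]
    simp only [map_sub, map_add, map_neg, map_smul, _root_.sub_apply,
      _root_.smul_apply, smul_eq_mul]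
    split_ifs <;> ring
  have s1 : ∑ i, ∑ j, x i ^ 2 * B (bv j) (bv j) = ‖x‖ ^ 2 * lap n f x := by
    rw [← hx2, lap_eq hf, Finset.sum_mul_sum]
  have s2 : ∑ i, ∑ j, x j ^ 2 * B (bv i) (bv i) = ‖x‖ ^ 2 * lap n f x := by
    rw [Finset.sum_comm, s1]
  have s3 : ∑ i, ∑ j, x j * x i * B (bv j) (bv i) = B x x := by
    rw [Finset.sum_comm, hBx]
  have s4 : ∑ _i : Fin n, ∑ j, x j * l (bv j) = n * l x := by
    rw [← hlx]; simp
  have s5 : ∑ i : Fin n, ∑ _j : Fin n, x i * l (bv i) = n * l x := by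
    rw [Finset.sum_comm, s4]
  have s6 : ∑ i : Fin n, ∑ j : Fin n, (if i = j then (x i * l (bv j) + x j * l (bv i)) else 0)
      = 2 * l x := by
    simp only [Finset.sum_ite_eq, Finset.mem_univ, if_true]
    rw [hlx, Finset.mul_sum]
    exact Finset.sum_congr rfl fun i _ => by ring
  simp only [sphLap, hterm, Finset.sum_add_distrib, Finset.sum_sub_distrib]
  rw [s1, s2, s3, s4, s5, s6, ← hBx]
  ring

/-! ### The radial differential equation for spherical moments -/

/-- The moment `∫ u(rζ) Φ(ζ) dσ(ζ)` of `u` on the sphere of radius `r`. -/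
def mom {n : ℕ} (u Φ : E n → ℝ) (r : ℝ) : ℝ := ∫ ζ, u (r • ζ) * Φ ζ ∂(sphMeasure n)

/-- The first radial derivative of `mom u Φ`. -/
def mom1 {n : ℕ} (u Φ : E n → ℝ) (r : ℝ) : ℝ := ∫ ζ, fderiv ℝ u (r • ζ) ζ * Φ ζ ∂(sphMeasure n)

/-- The second radial derivative of `mom u Φ`. -/
def mom2 {n : ℕ} (u Φ : E n → ℝ) (r : ℝ) : ℝ :=
  ∫ ζ, fderiv ℝ (fderiv ℝ u) (r • ζ) ζ ζ * Φ ζ ∂(sphMeasure n)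

/-- The coefficient `r^{n-1} (1-r²)^{2-n}` making the radial equation self-adjoint. -/
def radA (n : ℕ) (r : ℝ) : ℝ := r ^ (n - 1) * ((1 - r ^ 2) ^ (n - 2))⁻¹

/-- The weight `r^{n-3} (1-r²)^{2-n}` of the radial equation. -/
def radW (n : ℕ) (r : ℝ) : ℝ := r ^ (n - 3) * ((1 - r ^ 2) ^ (n - 2))⁻¹

lemma smul_mem_ball {n : ℕ} {r : ℝ} (hr : r ∈ Ioo (-1 : ℝ) 1) {ζ : E n} (hζ : ζ ∈ sphere (0 : E n) 1) :
    r • ζ ∈ ball (0 : E n) 1 := by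
  rw [mem_sphere_zero_iff_norm] at hζ
  rw [mem_ball_zero_iff, norm_smul, hζ, mul_one, Real.norm_eq_abs]
  exact abs_lt.2 hr

lemma norm_smul_sph {n : ℕ} {r : ℝ} (hr : 0 ≤ r) {ζ : E n} (hζ : ζ ∈ sphere (0 : E n) 1) :
    ‖r • ζ‖ = r := by
  rw [mem_sphere_zero_iff_norm] at hζ
  rw [norm_smul, hζ, mul_one, Real.norm_eq_abs, abs_of_nonneg hr]

section
variable {n : ℕ} {u : E n → ℝ}

lemma cdAt (hu : ContDiffOn ℝ 2 u (ball (0 : E n) 1)) {x : E n} (hx : x ∈ ball (0 : E n) 1) :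
    ContDiffAt ℝ 2 u x := hu.contDiffAt (isOpen_ball.mem_nhds hx)

lemma continuousOn_smul_sph (hu : ContDiffOn ℝ 2 u (ball (0 : E n) 1)) {r : ℝ}
    (hr : r ∈ Ioo (-1 : ℝ) 1) : ContinuousOn (fun ζ => u (r • ζ)) (sphere (0 : E n) 1) :=
  hu.continuousOn.comp (by fun_prop) fun _ hζ => smul_mem_ball hr hζ

lemma contOn_d1 (hu : ContDiffOn ℝ 2 u (ball (0 : E n) 1)) :
    ContinuousOn (fun p : ℝ × E n => fderiv ℝ u (p.1 • p.2) p.2)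
      (Ioo (-1) 1 ×ˢ sphere (0 : E n) 1) := by
  rintro ⟨r, ζ⟩ ⟨hr, hζ⟩
  have h := ((cdAt hu (smul_mem_ball hr hζ)).fderiv_right (m := 0) (by norm_num)).continuousAt
  have h2 := h.comp (f := fun p : ℝ × E n => p.1 • p.2) (x := (r, ζ)) (by fun_prop)
  exact (h2.clm_apply continuousAt_snd).continuousWithinAt

lemma contOn_d2 (hu : ContDiffOn ℝ 2 u (ball (0 : E n) 1)) :
    ContinuousOn (fun p : ℝ × E n => fderiv ℝ (fderiv ℝ u) (p.1 • p.2) p.2 p.2)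
      (Ioo (-1) 1 ×ˢ sphere (0 : E n) 1) := by
  rintro ⟨r, ζ⟩ ⟨hr, hζ⟩
  have h := (((cdAt hu (smul_mem_ball hr hζ)).fderiv_right (m := 1) (by norm_num)).fderiv_right
    (m := 0) (by norm_num)).continuousAt
  have h2 := h.comp (f := fun p : ℝ × E n => p.1 • p.2) (x := (r, ζ)) (by fun_prop)
  exact ((h2.clm_apply continuousAt_snd).clm_apply continuousAt_snd).continuousWithinAt

lemma slice_cont {h : ℝ × E n → ℝ} (hh : ContinuousOn h (Ioo (-1) 1 ×ˢ sphere (0 : E n) 1))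
    {r : ℝ} (hr : r ∈ Ioo (-1 : ℝ) 1) : ContinuousOn (fun ζ => h (r, ζ)) (sphere (0 : E n) 1) :=
  hh.comp (f := fun ζ => (r, ζ)) (by fun_prop) (fun _ hζ => ⟨hr, hζ⟩)

lemma hasDerivAt_mom (hn : 3 ≤ n) (hu : ContDiffOn ℝ 2 u (ball (0 : E n) 1)) {Φ : E n → ℝ}
    (hΦ : ContinuousOn Φ (sphere 0 1)) {r : ℝ} (hr : r ∈ Ioo (-1 : ℝ) 1) :
    HasDerivAt (mom u Φ) (mom1 u Φ r) r := by
  refine hasDerivAt_integral_sph hn (h := fun r ζ => u (r • ζ) * Φ ζ)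
    (h' := fun r ζ => fderiv ℝ u (r • ζ) ζ * Φ ζ) ?_ ?_ ?_ hr
  · exact fun t ht => (continuousOn_smul_sph hu ht).mul hΦ
  · exact (contOn_d1 hu).mul (hΦ.comp continuousOn_snd fun p hp => hp.2)
  · intro t ht ζ hζ
    have h1 := ((cdAt hu (smul_mem_ball ht hζ)).differentiableAt (by norm_num)).hasFDerivAt
    have h2 : HasDerivAt (fun t : ℝ => t • ζ) ζ t := by
      simpa using (hasDerivAt_id t).smul_const ζ
    exact (h1.comp_hasDerivAt t h2).mul_const _

lemma hasDerivAt_mom1 (hn : 3 ≤ n) (hu : ContDiffOn ℝ 2 u (ball (0 : E n) 1)) {Φ : E n → ℝ}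
    (hΦ : ContinuousOn Φ (sphere 0 1)) {r : ℝ} (hr : r ∈ Ioo (-1 : ℝ) 1) :
    HasDerivAt (mom1 u Φ) (mom2 u Φ r) r := by
  refine hasDerivAt_integral_sph hn (h := fun r ζ => fderiv ℝ u (r • ζ) ζ * Φ ζ)
    (h' := fun r ζ => fderiv ℝ (fderiv ℝ u) (r • ζ) ζ ζ * Φ ζ) ?_ ?_ ?_ hr
  · exact fun t ht => (slice_cont (contOn_d1 hu) ht).mul hΦ
  · exact (contOn_d2 hu).mul (hΦ.comp continuousOn_snd fun p hp => hp.2)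
  · intro t ht ζ hζ
    have h1 := (((cdAt hu (smul_mem_ball ht hζ)).fderiv_right (m := 1) (by norm_num)).differentiableAt
      (by norm_num)).hasFDerivAt
    have h2 : HasDerivAt (fun t : ℝ => t • ζ) ζ t := by
      simpa using (hasDerivAt_id t).smul_const ζ
    have h4 : HasDerivAt (fun t : ℝ => fderiv ℝ u (t • ζ)) (fderiv ℝ (fderiv ℝ u) (t • ζ) ζ) t :=
      h1.comp_hasDerivAt t h2
    have h5 := (ContinuousLinearMap.apply ℝ ℝ ζ).hasFDerivAt.comp_hasDerivAt t h4
    exact HasDerivAt.mul_const h5 _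

/-- The radial equation, obtained by separating the radial part of the Laplacian and moving the
spherical part onto the test function. -/
lemma mom_eq (hn : 3 ≤ n) (hu : ContDiffOn ℝ 2 u (ball (0 : E n) 1)) (hH : HHarmonic n u)
    {Φ : E n → ℝ} (hΦ : ContDiff ℝ 2 Φ) {r : ℝ} (hr : r ∈ Ioo (0 : ℝ) 1) :
    (1 - r ^ 2) * (r ^ 2 * mom2 u Φ r + ((n : ℝ) - 1) * r * mom1 u Φ r + mom u (sphLap Φ) r)
      + 2 * ((n : ℝ) - 2) * r ^ 3 * mom1 u Φ r = 0 := by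
  have hr' : r ∈ Ioo (-1 : ℝ) 1 := ⟨by linarith [hr.1], hr.2⟩
  have hD : 0 < 1 - r ^ 2 := by nlinarith [hr.1, hr.2]
  let f : E n → ℝ := fun y => u (r • y)
  have hf : ∀ ζ ∈ sphere (0 : E n) 1, ContDiffAt ℝ 2 f ζ := fun ζ hζ =>
    (cdAt hu (smul_mem_ball hr' hζ)).comp ζ (contDiff_const_smul r).contDiffAt
  have hf1 : fderiv ℝ f = fun y => r • fderiv ℝ u (r • y) := by
    ext1 y; exact fderiv_comp_smul (f := u) (x := y) r
  have hf2 : ∀ y, fderiv ℝ (fderiv ℝ f) y = (r * r) • fderiv ℝ (fderiv ℝ u) (r • y) := by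
    intro y
    rw [hf1]
    have h2 : fderiv ℝ (fun y => fderiv ℝ u (r • y)) y = r • fderiv ℝ (fderiv ℝ u) (r • y) :=
      fderiv_comp_smul (f := fderiv ℝ u) (x := y) r
    have h1 : fderiv ℝ (fun y => r • fderiv ℝ u (r • y)) y =
        r • fderiv ℝ (fun y => fderiv ℝ u (r • y)) y :=
      congrFun (fderiv_const_smul_field (f := fun y => fderiv ℝ u (r • y)) r) y
    rw [h1, h2, smul_smul]
  have hpt : ∀ ζ ∈ sphere (0 : E n) 1, (1 - r ^ 2) * (sphLap f ζ * Φ ζ) =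
      (-2 * ((n : ℝ) - 2) * r ^ 3 - (1 - r ^ 2) * ((n : ℝ) - 1) * r) * (fderiv ℝ u (r • ζ) ζ * Φ ζ)
       + (-(1 - r ^ 2) * r ^ 2) * (fderiv ℝ (fderiv ℝ u) (r • ζ) ζ ζ * Φ ζ) := by
    intro ζ hζ
    have hx := smul_mem_ball hr' hζ
    have h1 := hH (r • ζ) hx
    rw [norm_smul_sph hr.1.le hζ, Nder, map_smul, smul_eq_mul] at h1
    have hl : lap n f ζ = r ^ 2 * lap n u (r • ζ) := by
      rw [lap_eq (hf ζ hζ), lap_eq (cdAt hu hx), Finset.mul_sum]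
      refine Finset.sum_congr rfl fun i _ => ?_
      rw [hf2]; simp only [_root_.smul_apply, smul_eq_mul]; ring
    rw [sphLap_eq (hf ζ hζ), hl, hf2, hf1, mem_sphere_zero_iff_norm.1 hζ]
    simp only [_root_.smul_apply, smul_eq_mul]
    have h2 : (1 - r ^ 2) * lap n u (r • ζ) =
        - (2 * ((n : ℝ) - 2) * (r * fderiv ℝ u (r • ζ) ζ)) := by
      apply mul_left_cancel₀ hD.ne'
      linear_combination h1
    linear_combination (r ^ 2 * Φ ζ) * h2
  have hsym := integral_sphLap_mul hn hf (fun ζ _ => hΦ.contDiffAt (x := ζ))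
  have e1 : mom u (sphLap Φ) r = ∫ ζ, sphLap f ζ * Φ ζ ∂(sphMeasure n) := hsym.symm
  have hΦc : ContinuousOn Φ (sphere 0 1) := hΦ.continuous.continuousOn
  have e2 : (1 - r ^ 2) * mom u (sphLap Φ) r =
      (-2 * ((n : ℝ) - 2) * r ^ 3 - (1 - r ^ 2) * ((n : ℝ) - 1) * r) * mom1 u Φ r
       + (-(1 - r ^ 2) * r ^ 2) * mom2 u Φ r := by
    rw [e1, ← integral_const_mul, integral_congr_sph hpt, integral_add, integral_const_mul,
      integral_const_mul, mom1, mom2]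
    · exact (integrable_sph hn ((slice_cont (contOn_d1 hu) hr').mul hΦc)).const_mul _
    · exact (integrable_sph hn ((slice_cont (contOn_d2 hu) hr').mul hΦc)).const_mul _
  linear_combination e2

/-- The radial equation in self-adjoint form. -/
lemma hasDerivAt_radA_mom1 (hn : 3 ≤ n) (hu : ContDiffOn ℝ 2 u (ball (0 : E n) 1))
    (hH : HHarmonic n u) {Φ : E n → ℝ} (hΦ : ContDiff ℝ 2 Φ) {r : ℝ} (hr : r ∈ Ioo (0 : ℝ) 1) :
    HasDerivAt (fun r => radA n r * mom1 u Φ r) (-(radW n r * mom u (sphLap Φ) r)) r := by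
  have hD : 0 < 1 - r ^ 2 := by nlinarith [hr.1, hr.2]
  have h1 := hasDerivAt_mom1 hn hu hΦ.continuous.continuousOn (r := r)
    ⟨by linarith [hr.1], hr.2⟩
  have heq := mom_eq hn hu hH hΦ hr
  obtain ⟨k, rfl⟩ : ∃ k, n = k + 3 := ⟨n - 3, by omega⟩
  have e1 : k + 3 - 1 = k + 2 := by omega
  have e2 : k + 3 - 2 = k + 1 := by omega
  have e3 : k + 3 - 3 = k := by omega
  have hA : HasDerivAt (radA (k + 3)) (((k + 2 : ℕ) : ℝ) * r ^ (k + 1) * ((1 - r ^ 2) ^ (k + 1))⁻¹ +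
      r ^ (k + 2) * (-(((k + 1 : ℕ) : ℝ) * (1 - r ^ 2) ^ k * (-(2 * r))) /
        ((1 - r ^ 2) ^ (k + 1)) ^ 2)) r := by
    have a1 := hasDerivAt_pow (k + 2) r
    have a2 : HasDerivAt (fun r : ℝ => 1 - r ^ 2) (-(2 * r)) r := by
      simpa using (hasDerivAt_pow 2 r).const_sub 1
    have a3 := (a2.fun_pow (k + 1)).fun_inv (pow_pos hD _).ne'
    have := a1.mul a3
    unfold radA
    rw [e1, e2]
    exact this
  refine (hA.mul h1).congr_deriv ?_
  rw [radA, radW, e1, e2, e3]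
  push_cast at heq ⊢
  have hDk : (1 - r ^ 2) ^ k ≠ 0 := (pow_pos hD _).ne'
  have hD' := hD.ne'
  field_simp
  linear_combination ((1 - r^2)^k * r^k) * heq

end

/-! ### Growth implies a boundary distribution -/

/-- `Gr a f` says that `f r = O((1-r)^{-a})` on `[1/2, 1)`. -/
def Gr (a : ℝ) (f : ℝ → ℝ) : Prop := ∃ C, ∀ r ∈ Ico (1 / 2 : ℝ) 1, |f r| ≤ C * (1 - r) ^ (-a)

lemma smooth2 {n : ℕ} {Φ : E n → ℝ} (hΦ : ContDiff ℝ ∞ Φ) : ContDiff ℝ 2 Φ :=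
  hΦ.of_le (WithTop.coe_le_coe.2 le_top)

lemma Gr.mono {a a' : ℝ} (h : a ≤ a') {f : ℝ → ℝ} (hf : Gr a f) : Gr a' f := by
  obtain ⟨C, hC⟩ := hf
  have hC0 : 0 ≤ C := by
    have := (abs_nonneg _).trans (hC (1 / 2) ⟨le_rfl, by norm_num⟩)
    exact nonneg_of_mul_nonneg_left this (Real.rpow_pos_of_pos (by norm_num) _)
  refine ⟨C, fun r hr => (hC r hr).trans (mul_le_mul_of_nonneg_left ?_ hC0)⟩
  exact Real.rpow_le_rpow_of_exponent_ge (by linarith [hr.2]) (by linarith [hr.1]) (by linarith)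

/-- Integrating a growth bound of exponent `b + 1` lowers the exponent to `b`; at `b = 0` the bound
would be logarithmic. -/
lemma Gr.of_deriv {b : ℝ} (hb : 0 < b) {G G' : ℝ → ℝ}
    (h : ∀ r ∈ Ico (1 / 2 : ℝ) 1, HasDerivAt G (G' r) r) (hG' : Gr (b + 1) G') : Gr b G := by
  obtain ⟨C, hC⟩ := hG'
  have key : ∀ r ∈ Ico (1 / 2 : ℝ) 1, |G r| ≤ |G (1 / 2)| + C / b * (1 - r) ^ (-b) := by
    intro r hr
    have hC0 : 0 ≤ C := by
      have := (abs_nonneg _).trans (hC (1 / 2) ⟨le_rfl, by norm_num⟩)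
      exact nonneg_of_mul_nonneg_left this (Real.rpow_pos_of_pos (by norm_num) _)
    have hB : ∀ t ∈ Icc (1 / 2 : ℝ) r,
        HasDerivAt (fun t => |G (1 / 2)| + C / b * (1 - t) ^ (-b)) (C * (1 - t) ^ (-(b + 1))) t := by
      intro t ht
      have h1 : 0 < 1 - t := by linarith [ht.2, hr.2]
      have h2 : HasDerivAt (fun t : ℝ => 1 - t) (-1) t := by
        simpa using (hasDerivAt_id t).const_sub 1
      have h3 := ((h2.rpow_const (p := -b) (Or.inl h1.ne')).const_mul (C / b)).const_add |G (1 / 2)|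
      refine h3.congr_deriv ?_
      rw [show -b - 1 = -(b + 1) by ring]
      field_simp
    refine image_norm_le_of_norm_deriv_right_le_deriv_boundary' (f := G) (f' := G')
      (fun t ht => (h t ⟨ht.1, ht.2.trans_lt hr.2⟩).continuousAt.continuousWithinAt)
      (fun t ht => (h t ⟨ht.1, ht.2.trans hr.2⟩).hasDerivWithinAt) ?_
      (fun t ht => (hB t ht).continuousAt.continuousWithinAt)
      (fun t ht => (hB t ⟨ht.1, ht.2.le⟩).hasDerivWithinAt)
      (fun t ht => hC t ⟨ht.1, ht.2.trans hr.2⟩) ⟨hr.1, le_rfl⟩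
    simp only [Real.norm_eq_abs]
    have := mul_nonneg (div_nonneg hC0 hb.le)
      (Real.rpow_nonneg (show (0 : ℝ) ≤ 1 - 1 / 2 by norm_num) (-b))
    linarith
  refine ⟨|G (1 / 2)| + C / b, fun r hr => (key r hr).trans ?_⟩
  have h1 : 1 ≤ (1 - r) ^ (-b) :=
    Real.one_le_rpow_of_pos_of_le_one_of_nonpos (by linarith [hr.2]) (by linarith [hr.1])
      (by linarith)
  nlinarith [mul_le_mul_of_nonneg_left h1 (abs_nonneg (G (1 / 2)))]

section
variable {n : ℕ} {u : E n → ℝ}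

/-- One integration of the self-adjoint radial equation gains one power of `1-r` over a bound for
the moments, hence two powers for their derivatives. -/
lemma gr_mom1 (hn : 3 ≤ n) (hu : ContDiffOn ℝ 2 u (ball (0 : E n) 1)) (hH : HHarmonic n u)
    {a : ℝ} (ha : 0 < a) (h : ∀ Φ : E n → ℝ, ContDiff ℝ ∞ Φ → Gr a (mom u Φ)) {Φ : E n → ℝ}
    (hΦ : ContDiff ℝ ∞ Φ) : Gr (a - 1) (mom1 u Φ) := by
  obtain ⟨C, hC⟩ := h _ (contDiff_sphLap hΦ)
  obtain ⟨k, rfl⟩ : ∃ k, n = k + 3 := ⟨n - 3, by omega⟩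
  have e1 : k + 3 - 1 = k + 2 := by omega
  have e2 : k + 3 - 2 = k + 1 := by omega
  have e3 : k + 3 - 3 = k := by omega
  have hpow : ∀ r ∈ Ico (1 / 2 : ℝ) 1, (1 - r) ^ (-((k + 1 : ℕ) : ℝ)) = ((1 - r) ^ (k + 1))⁻¹ := by
    intro r hr
    rw [Real.rpow_neg (by linarith [hr.2]), Real.rpow_natCast]
  have hG : Gr (a + k) (fun r => radA (k + 3) r * mom1 u Φ r) := by
    refine Gr.of_deriv (by positivity)
      (fun r hr => hasDerivAt_radA_mom1 hn hu hH (smooth2 hΦ)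
        ⟨by linarith [hr.1], hr.2⟩) ⟨C, fun r hr => ?_⟩
    have h1 : 0 < 1 - r := by linarith [hr.2]
    have h0 : 0 < r := by linarith [hr.1]
    rw [abs_neg, abs_mul]
    have hW : |radW (k + 3) r| ≤ (1 - r) ^ (-((k + 1 : ℕ) : ℝ)) := by
      rw [hpow r hr, radW, e2, e3]
      have hD : 1 - r ≤ 1 - r ^ 2 := by nlinarith [hr.1]
      rw [abs_of_nonneg (mul_nonneg (by positivity) (inv_nonneg.2 (pow_nonneg (h1.le.trans hD) _)))]
      calc r ^ k * ((1 - r ^ 2) ^ (k + 1))⁻¹ ≤ 1 * ((1 - r) ^ (k + 1))⁻¹ := by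
            gcongr
            · exact inv_nonneg.2 (pow_nonneg (h1.le.trans hD) _)
            · exact pow_le_one₀ h0.le hr.2.le
        _ = _ := one_mul _
    calc |radW (k + 3) r| * |mom u (sphLap Φ) r|
        ≤ (1 - r) ^ (-((k + 1 : ℕ) : ℝ)) * (C * (1 - r) ^ (-a)) :=
          mul_le_mul hW (hC r hr) (abs_nonneg _) (Real.rpow_nonneg h1.le _)
      _ = C * (1 - r) ^ (-(a + k + 1)) := by
          rw [mul_left_comm, ← Real.rpow_add h1]
          congr 2; push_cast; ring
  obtain ⟨K, hK⟩ := hG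
  refine ⟨K * (2 ^ (k + 2) * 2 ^ (k + 1)), fun r hr => ?_⟩
  have h1 : 0 < 1 - r := by linarith [hr.2]
  have h0 : 0 < r := by linarith [hr.1]
  have hD : 0 < 1 - r ^ 2 := by nlinarith
  have hK0 := (abs_nonneg _).trans (hK r hr)
  have hA : 1 ≤ radA (k + 3) r * ((2 ^ (k + 2) * 2 ^ (k + 1)) * (1 - r) ^ (k + 1)) := by
    rw [radA, e1, e2]
    have a1 : 1 ≤ (r * 2) ^ (k + 2) := one_le_pow₀ (by linarith [hr.1])
    have a2 : 1 ≤ ((1 - r ^ 2)⁻¹ * (2 * (1 - r))) ^ (k + 1) := by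
      refine one_le_pow₀ ?_
      rw [inv_mul_eq_div, one_le_div hD]
      nlinarith
    have a3 := one_le_mul_of_one_le_of_one_le a1 a2
    calc (1 : ℝ) ≤ _ := a3
      _ = _ := by rw [mul_pow, mul_pow, mul_pow, inv_pow]; ring
  have hApos : 0 < radA (k + 3) r := by rw [radA]; positivity
  have hK' := hK r hr
  simp only at hK'
  rw [abs_mul, abs_of_pos hApos] at hK'
  calc |mom1 u Φ r| = 1 * |mom1 u Φ r| := (one_mul _).symm
    _ ≤ (radA (k + 3) r * ((2 ^ (k + 2) * 2 ^ (k + 1)) * (1 - r) ^ (k + 1))) * |mom1 u Φ r| := by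
        gcongr
    _ = ((2 ^ (k + 2) * 2 ^ (k + 1)) * (1 - r) ^ (k + 1)) * (radA (k + 3) r * |mom1 u Φ r|) := by
        ring
    _ ≤ ((2 ^ (k + 2) * 2 ^ (k + 1)) * (1 - r) ^ (k + 1)) * (K * (1 - r) ^ (-(a + k))) := by
        gcongr
    _ = K * (2 ^ (k + 2) * 2 ^ (k + 1)) * ((1 - r) ^ ((k + 1 : ℕ) : ℝ) * (1 - r) ^ (-(a + k))) := by
        rw [Real.rpow_natCast]; ring
    _ = _ := by
        rw [← Real.rpow_add h1]
        congr 2; push_cast; ring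

/-- A polynomial bound forces the moments to converge: the gain in `gr_mom1`, applied to all test
functions at once, lowers the exponent until the moments are Lipschitz up to `r = 1`. -/
theorem hasBoundaryDistribution_of_growth (hn : 3 ≤ n) (hu : ContDiffOn ℝ 2 u (ball (0 : E n) 1))
    (hH : HHarmonic n u) {C A : ℝ}
    (hg : ∀ x ∈ ball (0 : E n) 1, |u x| ≤ C * (1 - ‖x‖) ^ (-A)) : HasBoundaryDistribution n u := by
  obtain ⟨k, hk⟩ := exists_nat_ge A
  -- Half-integer exponents descend by steps of one to `1 / 2` and never meet the exponent `0`.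
  have start : ∀ Φ : E n → ℝ, ContDiff ℝ ∞ Φ → Gr (k + 1 / 2) (mom u Φ) := by
    intro Φ hΦ
    obtain ⟨M, hM⟩ := (isCompact_sphere (0 : E n) 1).exists_bound_of_continuousOn
      hΦ.continuous.continuousOn
    refine Gr.mono (show A ≤ k + 1 / 2 by linarith) ⟨C * M, fun r hr => ?_⟩
    refine abs_integral_sph_le hn fun ζ hζ => ?_
    have h0 : 0 ≤ r := by linarith [hr.1]
    have h1 := hg (r • ζ) (smul_mem_ball ⟨by linarith, hr.2⟩ hζ)
    rw [norm_smul_sph h0 hζ] at h1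
    rw [abs_mul]
    calc _ ≤ (C * (1 - r) ^ (-A)) * M :=
          mul_le_mul h1 (hM ζ hζ) (abs_nonneg _) ((abs_nonneg _).trans h1)
      _ = _ := by ring
  have hd : ∀ Φ : E n → ℝ, ContDiff ℝ ∞ Φ → ∀ r ∈ Ico (1 / 2 : ℝ) 1,
      HasDerivAt (mom u Φ) (mom1 u Φ r) r := fun Φ hΦ r hr =>
    hasDerivAt_mom hn hu hΦ.continuous.continuousOn ⟨by linarith [hr.1], hr.2⟩
  have base : ∀ Φ : E n → ℝ, ContDiff ℝ ∞ Φ → Gr (1 / 2) (mom u Φ) := by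
    clear hk
    induction k with
    | zero => simpa using start
    | succ k ih =>
      refine ih fun Φ hΦ => ?_
      refine Gr.of_deriv (by positivity) (hd Φ hΦ) ?_
      refine Gr.mono ?_ (gr_mom1 hn hu hH (by positivity) start hΦ)
      push_cast; linarith
  intro Φ hΦ
  obtain ⟨K, hK⟩ := gr_mom1 hn hu hH (by norm_num) base hΦ
  have hK0 : 0 ≤ K := by
    have := (abs_nonneg _).trans (hK (1 / 2) ⟨le_rfl, by norm_num⟩)
    exact nonneg_of_mul_nonneg_left this (Real.rpow_pos_of_pos (by norm_num) _)
  have hlip : LipschitzOnWith K.toNNReal (mom u Φ) (Ico (1 / 2 : ℝ) 1) := by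
    refine (convex_Ico _ _).lipschitzOnWith_of_nnnorm_hasDerivWithin_le
      (fun r hr => (hd Φ hΦ r hr).hasDerivWithinAt) fun r hr => ?_
    rw [← NNReal.coe_le_coe, coe_nnnorm, Real.coe_toNNReal _ hK0]
    refine (hK r hr).trans (mul_le_of_le_one_right hK0 ?_)
    exact Real.rpow_le_one (by linarith [hr.2]) (by linarith [hr.1]) (by norm_num)
  obtain ⟨g, hgl, hgE⟩ := hlip.extend_real
  refine ⟨g 1, ?_⟩
  have h1 : Tendsto g (𝓝[<] 1) (𝓝 (g 1)) :=
    hgl.continuous.continuousAt.tendsto.mono_left nhdsWithin_le_nhds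
  refine h1.congr' ?_
  filter_upwards [Ico_mem_nhdsLT (show (1 / 2 : ℝ) < 1 by norm_num)] with r hr
  exact (hgE hr).symm

end

/-! ### Uniqueness for the radial equation -/

/-- `Z` solves the radial equation with spherical eigenvalue `-lam` on `(0, 1)` and is `C¹` up to
`r = 0`. -/
def IsRad (n : ℕ) (lam : ℝ) (Z : ℝ → ℝ) : Prop :=
  ∃ Z1 : ℝ → ℝ, (∀ r ∈ Ioo (0 : ℝ) 1, HasDerivAt Z (Z1 r) r) ∧
    (∀ r ∈ Ioo (0 : ℝ) 1, HasDerivAt (fun r => radA n r * Z1 r) (radW n r * (lam * Z r)) r) ∧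
    ContinuousAt Z 0 ∧ ContinuousAt Z1 0

lemma radA_continuousAt_zero (n : ℕ) : ContinuousAt (radA n) 0 := by
  unfold radA
  refine (continuous_pow _).continuousAt.mul (ContinuousAt.inv₀ (by fun_prop) (by simp))

lemma radA_zero {n : ℕ} (hn : 3 ≤ n) : radA n 0 = 0 := by
  rw [radA, zero_pow (by omega), zero_mul]

lemma radA_pos (n : ℕ) {r : ℝ} (hr : r ∈ Ioo (0 : ℝ) 1) : 0 < radA n r := by
  have h0 := hr.1
  have hD : 0 < 1 - r ^ 2 := by nlinarith [hr.1, hr.2]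
  rw [radA]; positivity

lemma radW_pos (n : ℕ) {r : ℝ} (hr : r ∈ Ioo (0 : ℝ) 1) : 0 < radW n r := by
  have h0 := hr.1
  have hD : 0 < 1 - r ^ 2 := by nlinarith [hr.1, hr.2]
  rw [radW]; positivity

lemma IsRad.comb {n : ℕ} {lam : ℝ} {Z W : ℝ → ℝ} (hZ : IsRad n lam Z) (hW : IsRad n lam W)
    (a b : ℝ) : IsRad n lam (fun r => a * Z r - b * W r) := by
  obtain ⟨Z1, h1, h2, h3, h4⟩ := hZ
  obtain ⟨W1, k1, k2, k3, k4⟩ := hW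
  refine ⟨fun r => a * Z1 r - b * W1 r, fun r hr => ((h1 r hr).const_mul a).sub
    ((k1 r hr).const_mul b), fun r hr => ?_, (h3.const_mul a).sub (k3.const_mul b),
    (h4.const_mul a).sub (k4.const_mul b)⟩
  have := ((h2 r hr).const_mul a).sub ((k2 r hr).const_mul b)
  refine (this.congr_deriv (by ring)).congr_of_eventuallyEq (Eventually.of_forall fun t => ?_)
  simp only [Pi.sub_apply]; ring

/-- The only solution vanishing at `r = 1` is zero: `radA · Z · Z'` is nondecreasing from the value
`0` at `r = 0`, so that `Z²` is nondecreasing. -/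
lemma IsRad.eq_zero {n : ℕ} (hn : 3 ≤ n) {lam : ℝ} (hlam : 0 ≤ lam) {Z : ℝ → ℝ}
    (hZ : IsRad n lam Z) (hlim : Tendsto Z (𝓝[<] 1) (𝓝 0)) {r : ℝ} (hr : r ∈ Ioo (0 : ℝ) 1) :
    Z r = 0 := by
  obtain ⟨Z1, h1, h2, h3, h4⟩ := hZ
  have hY : ∀ r ∈ Ioo (0 : ℝ) 1, 0 ≤ Z r * (radA n r * Z1 r) := by
    intro r hr
    obtain ⟨c, hc, hce⟩ := exists_hasDerivAt_eq_slope (fun r => Z r * (radA n r * Z1 r))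
      (fun r => Z1 r * (radA n r * Z1 r) + Z r * (radW n r * (lam * Z r))) hr.1 (by
        intro t ht
        rcases ht.1.eq_or_lt with rfl | h0
        · exact (h3.mul ((radA_continuousAt_zero n).mul h4)).continuousWithinAt
        · have ht' : t ∈ Ioo (0 : ℝ) 1 := ⟨h0, ht.2.trans_lt hr.2⟩
          exact ((h1 t ht').mul (h2 t ht')).continuousAt.continuousWithinAt)
      (fun t ht => (h1 t ⟨ht.1, ht.2.trans hr.2⟩).mul (h2 t ⟨ht.1, ht.2.trans hr.2⟩))
    have hc' : c ∈ Ioo (0 : ℝ) 1 := ⟨hc.1, hc.2.trans hr.2⟩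
    have hnn : 0 ≤ Z1 c * (radA n c * Z1 c) + Z c * (radW n c * (lam * Z c)) := by
      have := mul_nonneg (radA_pos n hc').le (mul_self_nonneg (Z1 c))
      have := mul_nonneg (mul_nonneg (radW_pos n hc').le hlam) (mul_self_nonneg (Z c))
      nlinarith
    rw [hce, radA_zero hn, zero_mul, mul_zero, sub_zero, sub_zero] at hnn
    rwa [le_div_iff₀ hr.1, zero_mul] at hnn
  have hmono : ∀ t ∈ Ico r 1, Z r ^ 2 ≤ Z t ^ 2 := by
    intro t ht
    rcases ht.1.eq_or_lt with rfl | hrt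
    · exact le_rfl
    have hin : ∀ s ∈ Icc r t, s ∈ Ioo (0 : ℝ) 1 := fun s hs =>
      ⟨hr.1.trans_le hs.1, hs.2.trans_lt ht.2⟩
    obtain ⟨c, hc, hce⟩ := exists_hasDerivAt_eq_slope (fun r => Z r ^ 2)
      (fun r => 2 * Z r * Z1 r) hrt
      (fun s hs => ((h1 s (hin s hs)).continuousAt.pow 2).continuousWithinAt)
      (fun s hs => by simpa using (h1 s (hin s ⟨hs.1.le, hs.2.le⟩)).fun_pow 2)
    have hc' := hin c ⟨hc.1.le, hc.2.le⟩
    have hA := radA_pos n hc'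
    have h5 : 0 ≤ Z c * Z1 c := by
      have := hY c hc'
      rw [mul_left_comm] at this
      exact nonneg_of_mul_nonneg_right this hA
    have h6 : 0 ≤ (Z t ^ 2 - Z r ^ 2) / (t - r) := by rw [← hce]; nlinarith
    rw [le_div_iff₀ (sub_pos.2 hrt), zero_mul] at h6
    linarith
  have h7 : Z r ^ 2 ≤ 0 ^ 2 := by
    refine ge_of_tendsto (hlim.pow 2) ?_
    filter_upwards [Ico_mem_nhdsLT hr.2] with t ht using hmono t ht
  simpa using le_antisymm h7 (by simp [sq_nonneg])

lemma IsRad.unique {n : ℕ} (hn : 3 ≤ n) {lam : ℝ} (hlam : 0 ≤ lam) {Z W : ℝ → ℝ}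
    (hZ : IsRad n lam Z) (hW : IsRad n lam W) {a b : ℝ} (hlZ : Tendsto Z (𝓝[<] 1) (𝓝 a))
    (hlW : Tendsto W (𝓝[<] 1) (𝓝 b)) {r : ℝ} (hr : r ∈ Ioo (0 : ℝ) 1) : b * Z r = a * W r := by
  have h := (hZ.comb hW b a).eq_zero hn hlam (by
    have := (hlZ.const_mul b).sub (hlW.const_mul a)
    rwa [mul_comm b a, sub_self] at this) hr
  exact sub_eq_zero.1 h

/-- For eigenvalue `0` the solutions regular at the origin are constant. -/
lemma IsRad.eq_const {n : ℕ} (hn : 3 ≤ n) {Z : ℝ → ℝ} (hZ : IsRad n 0 Z) {r : ℝ}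
    (hr : r ∈ Ioo (0 : ℝ) 1) : Z r = Z 0 := by
  obtain ⟨Z1, h1, h2, h3, h4⟩ := hZ
  have hZ1 : ∀ r ∈ Ioo (0 : ℝ) 1, Z1 r = 0 := by
    intro r hr
    obtain ⟨c, hc, hce⟩ := exists_hasDerivAt_eq_slope (fun r => radA n r * Z1 r)
      (fun r => radW n r * (0 * Z r)) hr.1 (by
        intro t ht
        rcases ht.1.eq_or_lt with rfl | h0
        · exact ((radA_continuousAt_zero n).mul h4).continuousWithinAt
        · exact (h2 t ⟨h0, ht.2.trans_lt hr.2⟩).continuousAt.continuousWithinAt)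
      (fun t ht => h2 t ⟨ht.1, ht.2.trans hr.2⟩)
    rw [radA_zero hn, zero_mul, zero_mul, mul_zero, sub_zero, sub_zero, eq_comm,
      div_eq_zero_iff] at hce
    have := hce.resolve_right hr.1.ne'
    exact (mul_eq_zero.1 this).resolve_left (radA_pos n hr).ne'
  obtain ⟨c, hc, hce⟩ := exists_hasDerivAt_eq_slope Z Z1 hr.1 (by
        intro t ht
        rcases ht.1.eq_or_lt with rfl | h0
        · exact h3.continuousWithinAt
        · exact (h1 t ⟨h0, ht.2.trans_lt hr.2⟩).continuousAt.continuousWithinAt)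
      (fun t ht => h1 t ⟨ht.1, ht.2.trans hr.2⟩)
  rw [hZ1 c ⟨hc.1, hc.2.trans hr.2⟩, eq_comm, div_eq_zero_iff] at hce
  exact sub_eq_zero.1 (hce.resolve_right (by rw [sub_zero]; exact hr.1.ne'))

lemma isRad_mom {n : ℕ} (hn : 3 ≤ n) {u : E n → ℝ} (hu : ContDiffOn ℝ 2 u (ball (0 : E n) 1))
    (hH : HHarmonic n u) {Φ : E n → ℝ} (hΦ : ContDiff ℝ 2 Φ) {lam : ℝ}
    (he : ∀ ζ ∈ sphere (0 : E n) 1, sphLap Φ ζ = -lam * Φ ζ) : IsRad n lam (mom u Φ) := by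
  have hc : ContinuousOn Φ (sphere 0 1) := hΦ.continuous.continuousOn
  refine ⟨mom1 u Φ, fun r hr => hasDerivAt_mom hn hu hc ⟨by linarith [hr.1], hr.2⟩,
    fun r hr => ?_, (hasDerivAt_mom hn hu hc ⟨by norm_num, by norm_num⟩).continuousAt,
    (hasDerivAt_mom1 hn hu hc ⟨by norm_num, by norm_num⟩).continuousAt⟩
  refine (hasDerivAt_radA_mom1 hn hu hH hΦ hr).congr_deriv ?_
  have : mom u (sphLap Φ) r = -lam * mom u Φ r := by
    rw [mom, mom, ← integral_const_mul]
    refine integral_congr_sph fun ζ hζ => ?_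
    rw [he ζ hζ]; ring
  rw [this]; ring

/-! ### The hyperbolic Poisson kernel -/

section
variable {n : ℕ} {ζ : E n}

lemma norm_sub_sq_pos (hζ : ζ ∈ sphere (0 : E n) 1) {x : E n} (hx : x ∈ ball (0 : E n) 1) :
    0 < ‖x - ζ‖ ^ 2 := by
  have : x - ζ ≠ 0 := by
    rw [sub_ne_zero]
    rintro rfl
    rw [mem_ball_zero_iff, mem_sphere_zero_iff_norm.1 hζ] at hx
    exact lt_irrefl _ hx
  positivity

lemma contDiffAt_Ph (hζ : ζ ∈ sphere (0 : E n) 1) {x : E n} (hx : x ∈ ball (0 : E n) 1) :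
    ContDiffAt ℝ 2 (fun x => Ph n x ζ) x := by
  have h1 : ContDiffAt ℝ 2 (fun x : E n => 1 - ‖x‖ ^ 2) x :=
    contDiffAt_const.sub (contDiffAt_id.norm_sq ℝ)
  have h2 : ContDiffAt ℝ 2 (fun x : E n => ‖x - ζ‖ ^ 2) x :=
    (contDiffAt_id.sub contDiffAt_const).norm_sq ℝ
  exact (h1.div h2 (norm_sub_sq_pos hζ hx).ne').pow (n - 1)

lemma contDiffOn_Ph (hζ : ζ ∈ sphere (0 : E n) 1) :
    ContDiffOn ℝ 2 (fun x => Ph n x ζ) (ball (0 : E n) 1) :=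
  fun _ hx => (contDiffAt_Ph hζ hx).contDiffWithinAt

lemma line_normSq (c y v : E n) :
    HasDerivAt (fun t : ℝ => ‖y + t • v - c‖ ^ 2) (2 * inner ℝ (y - c) v) 0 := by
  have h : HasDerivAt (fun t : ℝ => y + t • v - c) v 0 := by
    simpa using (((hasDerivAt_id (0 : ℝ)).smul_const v).const_add y).sub_const c
  simpa using h.norm_sq

lemma fderiv_eq_of_line {f : E n → ℝ} {x v : E n} {d : ℝ} (hf : DifferentiableAt ℝ f x)
    (h : HasDerivAt (fun t : ℝ => f (x + t • v)) d 0) : fderiv ℝ f x v = d := by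
  have h2 : HasDerivAt (fun t : ℝ => x + t • v) v 0 := by
    simpa using ((hasDerivAt_id (0 : ℝ)).smul_const v).const_add x
  have h1 : HasFDerivAt f (fderiv ℝ f x) (x + (0 : ℝ) • v) := by simpa using hf.hasFDerivAt
  exact (h1.comp_hasDerivAt (0 : ℝ) h2).unique h

/-- The derivative of `(1-|y|²)/|y-ζ|²` in the direction `v`. -/
def gradQ (ζ v y : E n) : ℝ :=
  (-(2 * inner ℝ y v) * ‖y - ζ‖ ^ 2 - (1 - ‖y‖ ^ 2) * (2 * inner ℝ (y - ζ) v)) / (‖y - ζ‖ ^ 2) ^ 2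

lemma line_Q (y v : E n) (hb : ‖y - ζ‖ ^ 2 ≠ 0) :
    HasDerivAt (fun t : ℝ => (1 - ‖y + t • v‖ ^ 2) / ‖y + t • v - ζ‖ ^ 2) (gradQ ζ v y) 0 := by
  have h1 := (line_normSq 0 y v).const_sub 1
  have h2 := line_normSq ζ y v
  simp only [sub_zero] at h1
  have := h1.fun_div h2 (by simpa using hb)
  simpa [gradQ] using this

lemma fderiv_Ph (hζ : ζ ∈ sphere (0 : E n) 1) {x : E n} (hx : x ∈ ball (0 : E n) 1) (v : E n) :
    fderiv ℝ (fun x => Ph n x ζ) x v =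
      ((n - 1 : ℕ) : ℝ) * ((1 - ‖x‖ ^ 2) / ‖x - ζ‖ ^ 2) ^ (n - 1 - 1) * gradQ ζ v x := by
  refine fderiv_eq_of_line ((contDiffAt_Ph hζ hx).differentiableAt (by norm_num)) ?_
  simpa [Ph] using (line_Q x v (norm_sub_sq_pos hζ hx).ne').fun_pow (n - 1)

lemma line_gradQ (y v : E n) (hb : ‖y - ζ‖ ^ 2 ≠ 0) :
    HasDerivAt (fun t : ℝ => gradQ ζ v (y + t • v))
      (-(2 * ‖v‖ ^ 2) * (‖y - ζ‖ ^ 2 + (1 - ‖y‖ ^ 2)) / (‖y - ζ‖ ^ 2) ^ 2 -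
        4 * inner ℝ (y - ζ) v * (-(2 * inner ℝ y v) * ‖y - ζ‖ ^ 2 -
          (1 - ‖y‖ ^ 2) * (2 * inner ℝ (y - ζ) v)) / (‖y - ζ‖ ^ 2) ^ 3) 0 := by
  have hb' : ‖y - ζ‖ ≠ 0 := fun h => hb (by simp [h])
  have h1 := (line_normSq 0 y v).const_sub 1
  have h2 := line_normSq ζ y v
  simp only [sub_zero] at h1
  have h3 : ∀ c : E n, HasDerivAt (fun t : ℝ => 2 * inner ℝ (y + t • v - c) v) (2 * ‖v‖ ^ 2) 0 := by
    intro c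
    have h : HasDerivAt (fun t : ℝ => y + t • v - c) v 0 := by
      simpa using (((hasDerivAt_id (0 : ℝ)).smul_const v).const_add y).sub_const c
    have := (h.inner ℝ (hasDerivAt_const (0 : ℝ) v)).const_mul 2
    simpa [real_inner_self_eq_norm_sq] using this
  have h4 := h3 0
  simp only [sub_zero] at h4
  have := ((h4.fun_neg.fun_mul h2).fun_sub (h1.fun_mul (h3 ζ))).fun_div (h2.fun_pow 2)
    (by simpa using hb)
  refine this.congr_deriv ?_
  simp only [zero_smul, add_zero]
  field_simp
  ring

lemma lap_Ph (hn : 3 ≤ n) (hζ : ζ ∈ sphere (0 : E n) 1) {x : E n} (hx : x ∈ ball (0 : E n) 1) :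
    lap n (fun x => Ph n x ζ) x =
      ((n : ℝ) - 1) * ((1 - ‖x‖ ^ 2) / ‖x - ζ‖ ^ 2) ^ (n - 3) *
        (((n : ℝ) - 2) * (4 / (‖x - ζ‖ ^ 2) ^ 2) + ((1 - ‖x‖ ^ 2) / ‖x - ζ‖ ^ 2) *
          ((4 - 2 * n) * (1 - ‖x‖ ^ 2 + ‖x - ζ‖ ^ 2) / (‖x - ζ‖ ^ 2) ^ 2)) := by
  obtain ⟨k, rfl⟩ : ∃ k, n = k + 3 := ⟨n - 3, by omega⟩
  have hb := (norm_sub_sq_pos hζ hx).ne'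
  have hb' : ‖x - ζ‖ ≠ 0 := fun h => hb (by simp [h])
  have hterm : ∀ i : Fin (k + 3), fderiv ℝ (fun y => fderiv ℝ (fun x => Ph (k + 3) x ζ) y (bv i)) x (bv i) =
      ((k : ℝ) + 2) * ((1 - ‖x‖ ^ 2) / ‖x - ζ‖ ^ 2) ^ k * (((k : ℝ) + 1) * gradQ ζ (bv i) x ^ 2 +
        ((1 - ‖x‖ ^ 2) / ‖x - ζ‖ ^ 2) * (-2 * (‖x - ζ‖ ^ 2 + (1 - ‖x‖ ^ 2)) / (‖x - ζ‖ ^ 2) ^ 2 -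
        4 * (x - ζ) i * (-(2 * x i) * ‖x - ζ‖ ^ 2 -
          (1 - ‖x‖ ^ 2) * (2 * (x - ζ) i)) / (‖x - ζ‖ ^ 2) ^ 3)) := by
    intro i
    have hev : (fun y => fderiv ℝ (fun x => Ph (k + 3) x ζ) y (bv i)) =ᶠ[𝓝 x] fun y =>
        ((k + 2 : ℕ) : ℝ) * ((1 - ‖y‖ ^ 2) / ‖y - ζ‖ ^ 2) ^ (k + 1) * gradQ ζ (bv i) y := by
      filter_upwards [isOpen_ball.mem_nhds hx] with y hy using fderiv_Ph hζ hy _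
    have hdiff : DifferentiableAt ℝ (fun y => fderiv ℝ (fun x => Ph (k + 3) x ζ) y (bv i)) x :=
      (((contDiffAt_Ph hζ hx).fderiv_right (m := 1) (by norm_num)).clm_apply
        contDiffAt_const).differentiableAt (by norm_num)
    rw [hev.fderiv_eq]
    refine fderiv_eq_of_line (hev.differentiableAt_iff.1 hdiff) ?_
    have h := (((line_Q x (bv i) hb).fun_pow (k + 1)).const_mul ((k + 2 : ℕ) : ℝ)).fun_mul
      (line_gradQ x (bv i) hb)
    refine h.congr_deriv ?_
    have i1 : ∀ y : E (k + 3), inner ℝ y (bv i) = y i := by intro y; simp [bv, EuclideanSpace.inner_single_right]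
    have i2 : ‖(bv i : E (k + 3))‖ = 1 := by simp [bv]
    simp only [i1, i2, zero_smul, add_zero]
    push_cast
    ring
  have s1 : ∑ i, x i ^ 2 = ‖x‖ ^ 2 := (EuclideanSpace.real_norm_sq_eq x).symm
  have s2 : ∑ i, (x - ζ) i ^ 2 = ‖x - ζ‖ ^ 2 := (EuclideanSpace.real_norm_sq_eq _).symm
  have s3 : ∑ i, x i * (x - ζ) i = (‖x - ζ‖ ^ 2 - (1 - ‖x‖ ^ 2)) / 2 := by
    have hz := mem_sphere_zero_iff_norm.1 hζ
    have h : inner ℝ (x - ζ) x = ∑ i, x i * (x - ζ) i := by simp [PiLp.inner_apply]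
    rw [← h, norm_sub_sq_real, inner_sub_left, real_inner_self_eq_norm_sq, hz, real_inner_comm]
    ring
  have hG : ∑ i : Fin (k + 3), gradQ ζ (bv i) x ^ 2 = 4 / (‖x - ζ‖ ^ 2) ^ 2 := by
    have h : ∀ i, gradQ ζ (bv i) x ^ 2 = (4 / (‖x - ζ‖ ^ 2) ^ 4) * ((‖x - ζ‖ ^ 2) ^ 2 * x i ^ 2 +
        2 * (‖x - ζ‖ ^ 2) * (1 - ‖x‖ ^ 2) * (x i * (x - ζ) i) +
          (1 - ‖x‖ ^ 2) ^ 2 * (x - ζ) i ^ 2) := by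
      intro i
      have i1 : ∀ y : E (k + 3), inner ℝ y (bv i) = y i := by intro y; simp [bv, EuclideanSpace.inner_single_right]
      rw [gradQ, i1, i1]
      field_simp
      ring
    rw [Finset.sum_congr rfl fun i _ => h i, ← Finset.mul_sum, Finset.sum_add_distrib,
      Finset.sum_add_distrib, ← Finset.mul_sum, ← Finset.mul_sum, ← Finset.mul_sum, s1, s2, s3]
    field_simp
    ring
  have hS : ∑ i : Fin (k + 3), 4 * (x - ζ) i * (-(2 * x i) * ‖x - ζ‖ ^ 2 -
          (1 - ‖x‖ ^ 2) * (2 * (x - ζ) i)) = -4 * (‖x - ζ‖ ^ 2) * (1 - ‖x‖ ^ 2 + ‖x - ζ‖ ^ 2) := by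
    have h : ∀ i, 4 * (x - ζ) i * (-(2 * x i) * ‖x - ζ‖ ^ 2 - (1 - ‖x‖ ^ 2) * (2 * (x - ζ) i)) =
        (-8 * ‖x - ζ‖ ^ 2) * (x i * (x - ζ) i) + (-8 * (1 - ‖x‖ ^ 2)) * (x - ζ) i ^ 2 := by
      intro i; ring
    rw [Finset.sum_congr rfl fun i _ => h i, Finset.sum_add_distrib, ← Finset.mul_sum,
      ← Finset.mul_sum, s2, s3]
    ring
  unfold lap
  refine (Finset.sum_congr rfl fun i _ => hterm i).trans ?_
  rw [← Finset.mul_sum, Finset.sum_add_distrib, ← Finset.mul_sum, ← Finset.mul_sum,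
    Finset.sum_sub_distrib, hG, ← Finset.sum_div, ← Finset.sum_div, hS]
  simp only [Finset.sum_const, Finset.card_univ, Fintype.card_fin, nsmul_eq_mul,
    Nat.add_sub_cancel]
  push_cast
  field_simp
  ring

lemma hHarmonic_Ph (hn : 3 ≤ n) (hζ : ζ ∈ sphere (0 : E n) 1) :
    HHarmonic n (fun x => Ph n x ζ) := by
  intro x hx
  have hb := (norm_sub_sq_pos hζ hx).ne'
  have hb' : ‖x - ζ‖ ≠ 0 := fun h => hb (by simp [h])
  have hz := mem_sphere_zero_iff_norm.1 hζ
  have hxd : inner ℝ (x - ζ) x = (‖x - ζ‖ ^ 2 - (1 - ‖x‖ ^ 2)) / 2 := by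
    rw [norm_sub_sq_real, inner_sub_left, real_inner_self_eq_norm_sq, hz, real_inner_comm]; ring
  rw [Nder, fderiv_Ph hζ hx, lap_Ph hn hζ hx, gradQ, hxd, real_inner_self_eq_norm_sq]
  obtain ⟨k, rfl⟩ : ∃ k, n = k + 3 := ⟨n - 3, by omega⟩
  simp only [show k + 3 - 1 = k + 2 by omega, show k + 2 - 1 = k + 1 by omega,
    Nat.add_sub_cancel, pow_succ]
  push_cast
  field_simp
  ring

end

/-! ### Poisson integrals -/

section
variable {n : ℕ} {ζ : E n}

/-- The zonal profile of the Poisson kernel: `P_h(sη, ζ)` as a function of `t = ⟨η, ζ⟩`. -/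
def prof (n : ℕ) (s t : ℝ) : ℝ := ((1 - s ^ 2) / (1 + s ^ 2 - 2 * s * t)) ^ (n - 1)

lemma normSq_smul_sub {η : E n} (hη : η ∈ sphere (0 : E n) 1) (hζ : ζ ∈ sphere (0 : E n) 1) (s : ℝ) :
    ‖s • η - ζ‖ ^ 2 = 1 + s ^ 2 - 2 * s * inner ℝ η ζ := by
  rw [norm_sub_sq_real, norm_smul, real_inner_smul_left, mem_sphere_zero_iff_norm.1 hη,
    mem_sphere_zero_iff_norm.1 hζ, mul_one, Real.norm_eq_abs, sq_abs]
  ring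

lemma Ph_smul {η : E n} (hη : η ∈ sphere (0 : E n) 1) (hζ : ζ ∈ sphere (0 : E n) 1) (s : ℝ) :
    Ph n (s • η) ζ = prof n s (inner ℝ η ζ) := by
  rw [Ph, normSq_smul_sub hη hζ, prof, norm_smul, mem_sphere_zero_iff_norm.1 hη, mul_one,
    Real.norm_eq_abs, sq_abs]

lemma Ph_smul_comm {η : E n} (hη : η ∈ sphere (0 : E n) 1) (hζ : ζ ∈ sphere (0 : E n) 1) (s : ℝ) :
    Ph n (s • η) ζ = Ph n (s • ζ) η := by
  rw [Ph_smul hη hζ, Ph_smul hζ hη, real_inner_comm]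

lemma Ph_nonneg {x : E n} (hx : x ∈ ball (0 : E n) 1) :
    0 ≤ Ph n x ζ := by
  have h := mem_ball_zero_iff.1 hx
  have : 0 ≤ 1 - ‖x‖ ^ 2 := by nlinarith [norm_nonneg x]
  rw [Ph]; positivity

/-- The constant test function has eigenvalue `0`, so the spherical means of the Poisson kernel are
constant in the radius, with the value `1` at the origin. -/
lemma mom_Ph_one (hn : 3 ≤ n) (hζ : ζ ∈ sphere (0 : E n) 1) {s : ℝ} (hs : s ∈ Ioo (0 : ℝ) 1) :
    ∫ η, Ph n (s • η) ζ ∂(sphMeasure n) = 1 := by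
  have := isProbabilityMeasure_sph hn
  have hL : ∀ (i j : Fin n) (c : ℝ), Lder i j (fun _ : E n => c) = fun _ => 0 := by
    intro i j c; ext x; simp [Lder]
  have h := (isRad_mom hn (contDiffOn_Ph hζ) (hHarmonic_Ph hn hζ) (Φ := fun _ => 1) contDiff_const
    (lam := 0) (fun x _ => by
      simp [sphLap, hL])).eq_const hn hs
  have h0 : mom (fun x => Ph n x ζ) (fun _ => 1) 0 = 1 := by
    simp [mom, Ph, mem_sphere_zero_iff_norm.1 hζ]
  rw [h0] at h
  simpa [mom] using h

lemma half_dist_le {η : E n} (hη : η ∈ sphere (0 : E n) 1) (hζ : ζ ∈ sphere (0 : E n) 1) {s : ℝ}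
    (hs : s ∈ Ioo (0 : ℝ) 1) : ‖η - ζ‖ / 2 ≤ ‖s • η - ζ‖ := by
  have h1 : ‖η - ζ‖ ≤ ‖η - s • η‖ + ‖s • η - ζ‖ := norm_sub_le_norm_sub_add_norm_sub _ _ _
  have h2 : ‖η - s • η‖ = 1 - s := by
    rw [show η - s • η = (1 - s) • η by module, norm_smul, mem_sphere_zero_iff_norm.1 hη, mul_one,
      Real.norm_eq_abs, abs_of_pos (by linarith [hs.2])]
  have h3 : ‖ζ‖ - ‖s • η‖ ≤ ‖ζ - s • η‖ := norm_sub_norm_le _ _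
  rw [norm_smul_sph hs.1.le hη, mem_sphere_zero_iff_norm.1 hζ, norm_sub_rev] at h3
  linarith

lemma continuousOn_Ph_smul (hζ : ζ ∈ sphere (0 : E n) 1) {s : ℝ} (hs : s ∈ Ioo (0 : ℝ) 1) :
    ContinuousOn (fun η => Ph n (s • η) ζ) (sphere (0 : E n) 1) :=
  continuousOn_smul_sph (contDiffOn_Ph hζ) ⟨by linarith [hs.1], hs.2⟩

/-- The Poisson kernel is an approximate identity. -/
lemma tendsto_mom_Ph (hn : 3 ≤ n) (hζ : ζ ∈ sphere (0 : E n) 1) {Φ : E n → ℝ}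
    (hΦ : ContinuousOn Φ (sphere (0 : E n) 1)) :
    Tendsto (mom (fun x => Ph n x ζ) Φ) (𝓝[<] 1) (𝓝 (Φ ζ)) := by
  have := isProbabilityMeasure_sph hn
  obtain ⟨M, hM⟩ := (isCompact_sphere (0 : E n) 1).exists_bound_of_continuousOn hΦ
  have hM0 : 0 ≤ M := (norm_nonneg _).trans (hM ζ hζ)
  rw [Metric.tendsto_nhds]
  intro ε hε
  obtain ⟨δ, hδ, hδΦ⟩ := Metric.continuousOn_iff.1 hΦ ζ hζ (ε / 2) (by positivity)
  let D : ℝ → ℝ := fun s => ((1 - s ^ 2) * (4 / δ ^ 2)) ^ (n - 1)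
  have hD : Tendsto (fun s => 2 * M * D s) (𝓝[<] 1) (𝓝 0) := by
    have h1 : ContinuousAt (fun s => 2 * M * D s) 1 := by fun_prop
    have h2 : 2 * M * D 1 = 0 := by
      have : n - 1 ≠ 0 := by omega
      simp [D, this]
    have := h1.tendsto.mono_left (nhdsWithin_le_nhds (s := Iio 1))
    rwa [h2] at this
  filter_upwards [Ioo_mem_nhdsLT (show (0 : ℝ) < 1 by norm_num),
    hD.eventually (gt_mem_nhds (show (0 : ℝ) < ε / 2 by positivity))] with s hs hsD
  have hcP := continuousOn_Ph_smul hζ hs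
  have hsq : 0 < 1 - s ^ 2 := by nlinarith [hs.1, hs.2]
  have hpt : ∀ η ∈ sphere (0 : E n) 1, |Ph n (s • η) ζ * (Φ η - Φ ζ)| ≤
      ε / 2 * Ph n (s • η) ζ + 2 * M * D s := by
    intro η hη
    have hP := Ph_nonneg (ζ := ζ) (smul_mem_ball (r := s) ⟨by linarith [hs.1], hs.2⟩ hη)
    have hD0 : 0 ≤ D s := by simp only [D]; positivity
    rw [abs_mul, abs_of_nonneg hP]
    rcases lt_or_ge (dist η ζ) δ with hd | hd
    · have h1 := (hδΦ η hη hd).le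
      rw [Real.dist_eq] at h1
      have := mul_le_mul_of_nonneg_left h1 hP
      have : 0 ≤ 2 * M * D s := by positivity
      linarith
    · have h1 : |Φ η - Φ ζ| ≤ 2 * M := by
        have := abs_sub (Φ η) (Φ ζ)
        have h2 := hM η hη
        have h3 := hM ζ hζ
        rw [Real.norm_eq_abs] at h2 h3
        linarith
      have h2 : Ph n (s • η) ζ ≤ D s := by
        have h3 := half_dist_le hη hζ hs
        rw [dist_eq_norm] at hd
        have h4 : δ ^ 2 / 4 ≤ ‖s • η - ζ‖ ^ 2 := by nlinarith
        rw [Ph, norm_smul_sph hs.1.le hη]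
        have h5 : 0 < δ ^ 2 / 4 := by positivity
        refine pow_le_pow_left₀ (by positivity) ?_ _
        rw [div_eq_mul_inv]
        refine mul_le_mul_of_nonneg_left ?_ hsq.le
        rw [show 4 / δ ^ 2 = (δ ^ 2 / 4)⁻¹ by rw [inv_div]]
        exact inv_anti₀ h5 h4
      have := mul_le_mul h2 h1 (abs_nonneg _) hD0
      nlinarith
  have hint := mom_Ph_one hn hζ hs
  have hdiff : mom (fun x => Ph n x ζ) Φ s - Φ ζ =
      ∫ η, Ph n (s • η) ζ * (Φ η - Φ ζ) ∂(sphMeasure n) := by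
    simp only [mul_sub]
    have i1 : Integrable (fun η => Ph n (s • η) ζ * Φ η) (sphMeasure n) :=
      integrable_sph hn (hcP.mul hΦ)
    have i2 : Integrable (fun η => Ph n (s • η) ζ * Φ ζ) (sphMeasure n) :=
      (integrable_sph hn hcP).mul_const _
    rw [integral_sub i1 i2, integral_mul_const, hint, one_mul, mom]
  rw [Real.dist_eq, hdiff]
  calc |∫ η, Ph n (s • η) ζ * (Φ η - Φ ζ) ∂(sphMeasure n)|
      ≤ ∫ η, |Ph n (s • η) ζ * (Φ η - Φ ζ)| ∂(sphMeasure n) := abs_integral_le_integral_abs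
    _ ≤ ∫ η, (ε / 2 * Ph n (s • η) ζ + 2 * M * D s) ∂(sphMeasure n) :=
        integral_mono_sph hn (hcP.mul (hΦ.sub continuousOn_const)).abs
          ((continuousOn_const.mul hcP).add continuousOn_const) hpt
    _ = ε / 2 + 2 * M * D s := by
        rw [integral_add ((integrable_sph hn hcP).const_mul _) (integrable_const _),
          integral_const_mul, hint, integral_const]
        simp
    _ < ε := by linarith

end

/-! ### Zonal polynomials -/

section
variable {n : ℕ}

/-- The spherical Laplacian in terms of zonal profiles: `p ↦ (1-X²) p'' - (n-1) X p'`. -/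
def zonL (n : ℕ) : Polynomial ℝ →ₗ[ℝ] Polynomial ℝ :=
  LinearMap.mulLeft ℝ (1 - Polynomial.X ^ 2) ∘ₗ Polynomial.derivative ∘ₗ Polynomial.derivative -
    LinearMap.mulLeft ℝ (Polynomial.C ((n : ℝ) - 1) * Polynomial.X) ∘ₗ Polynomial.derivative

lemma zonL_apply (p : Polynomial ℝ) : zonL n p =
    (1 - Polynomial.X ^ 2) * Polynomial.derivative (Polynomial.derivative p) -
      Polynomial.C ((n : ℝ) - 1) * Polynomial.X * Polynomial.derivative p := rfl

lemma contDiff_zonal (p : Polynomial ℝ) (ξ : E n) {k : ℕ∞ω} :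
    ContDiff ℝ k (fun x : E n => p.eval (inner ℝ ξ x)) := by
  have h : ContDiff ℝ k (fun t : ℝ => p.eval t) := by
    simpa using Polynomial.contDiff_aeval (𝕜 := ℝ) p k
  exact h.comp (innerSL ℝ ξ).contDiff

lemma sphLap_zonal (p : Polynomial ℝ) {ξ ζ : E n} (hξ : ξ ∈ sphere (0 : E n) 1)
    (hζ : ζ ∈ sphere (0 : E n) 1) :
    sphLap (fun x => p.eval (inner ℝ ξ x)) ζ = (zonL n p).eval (inner ℝ ξ ζ) := by
  have hd : ∀ (q : Polynomial ℝ) (y : E n), HasFDerivAt (fun x => q.eval (inner ℝ ξ x))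
      (q.derivative.eval (inner ℝ ξ y) • innerSL ℝ ξ) y := fun q y =>
    (q.hasDerivAt _).comp_hasFDerivAt y (innerSL ℝ ξ).hasFDerivAt
  have h1 : fderiv ℝ (fun x : E n => p.eval (inner ℝ ξ x)) =
      fun y => p.derivative.eval (inner ℝ ξ y) • innerSL ℝ ξ := by
    ext1 y; exact (hd p y).fderiv
  have h2 := ((hd p.derivative ζ).smul_const (innerSL ℝ ξ)).fderiv
  have hc : ContDiffAt ℝ 2 (fun x : E n => p.eval (inner ℝ ξ x)) ζ :=
    (contDiff_zonal p ξ).contDiffAt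
  have s1 : ∑ i, ξ i ^ 2 = 1 := by
    rw [← EuclideanSpace.real_norm_sq_eq, mem_sphere_zero_iff_norm.1 hξ]; norm_num
  have i1 : ∀ i, inner ℝ ξ (bv i) = ξ i := by
    intro i; simp [bv, EuclideanSpace.inner_single_right]
  rw [sphLap_eq hc, lap_eq hc, h1, h2, mem_sphere_zero_iff_norm.1 hζ, zonL_apply]
  simp only [ContinuousLinearMap.smulRight_apply, _root_.smul_apply, innerSL_apply_apply, smul_eq_mul,
    i1, Polynomial.eval_sub, Polynomial.eval_mul, Polynomial.eval_one, Polynomial.eval_pow,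
    Polynomial.eval_X, Polynomial.eval_C]
  have : ∑ i, p.derivative.derivative.eval (inner ℝ ξ ζ) * ξ i * ξ i =
      p.derivative.derivative.eval (inner ℝ ξ ζ) := by
    simp only [mul_assoc, ← pow_two]
    rw [← Finset.mul_sum, s1, mul_one]
  rw [this]
  ring

/-- The eigenvalue `m (m + n - 2)` of the spherical Laplacian in degree `m`. -/
def eig (n m : ℕ) : ℝ := m * (m + n - 2)

lemma eig_lt (hn : 3 ≤ n) {l m : ℕ} (h : l < m) : eig n l < eig n m := by
  have h1 : (3 : ℝ) ≤ n := by exact_mod_cast hn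
  have h2 : (l : ℝ) + 1 ≤ m := by exact_mod_cast h
  have h3 : (0 : ℝ) ≤ l := by positivity
  unfold eig; nlinarith

lemma eig_nonneg (hn : 3 ≤ n) (m : ℕ) : 0 ≤ eig n m := by
  have h1 : (3 : ℝ) ≤ n := by exact_mod_cast hn
  have h3 : (0 : ℝ) ≤ m := by positivity
  unfold eig; nlinarith

/-- The span of the eigenprofiles of degree less than `m`. -/
def eigSpan (n m : ℕ) : Submodule ℝ (Polynomial ℝ) :=
  Submodule.span ℝ {p | ∃ l < m, zonL n p = -eig n l • p}

lemma zonL_X_pow (m : ℕ) : zonL n (Polynomial.X ^ m) + eig n m • Polynomial.X ^ m =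
    ((m : ℝ) * (m - 1)) • Polynomial.X ^ (m - 2) := by
  rw [zonL_apply]
  rcases m with _ | _ | k
  · simp [eig]
  · have : (Polynomial.C (2 : ℝ)) = 2 := rfl
    simp [eig, Polynomial.smul_eq_C_mul, this]
    ring
  · simp only [Polynomial.derivative_X_pow, Polynomial.derivative_mul, Polynomial.derivative_C,
      Polynomial.smul_eq_C_mul, eig, Polynomial.C_mul, Polynomial.C_sub, Polynomial.C_add,
      Nat.add_sub_cancel, show k + 1 + 1 - 2 = k by omega]
    push_cast
    simp only [Polynomial.C_add, Polynomial.C_1]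
    have : (Polynomial.C (2 : ℝ)) = 2 := rfl
    rw [this]
    ring

/-- The eigenprofiles span all polynomials: on the span of lower eigenprofiles the operator
`zonL + eig n m` is invertible, which corrects `X ^ m` to an eigenprofile. -/
lemma X_pow_mem_eigSpan (hn : 3 ≤ n) (m : ℕ) : Polynomial.X ^ m ∈ eigSpan n (m + 1) := by
  induction m using Nat.strong_induction_on with
  | _ m ih =>
  have mono : ∀ {a b : ℕ}, a ≤ b → eigSpan n a ≤ eigSpan n b := fun h =>
    Submodule.span_mono fun p ⟨l, hl, hp⟩ => ⟨l, hl.trans_le h, hp⟩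
  have solve : ∀ p ∈ eigSpan n m, ∃ y ∈ eigSpan n m, zonL n y + eig n m • y = p := by
    intro p hp
    induction hp using Submodule.span_induction with
    | mem p hp =>
      obtain ⟨l, hl, he⟩ := hp
      have hne : eig n m - eig n l ≠ 0 := (sub_pos.2 (eig_lt hn hl)).ne'
      refine ⟨(eig n m - eig n l)⁻¹ • p, Submodule.smul_mem _ _ (Submodule.subset_span ⟨l, hl, he⟩),
        ?_⟩
      rw [map_smul, he, smul_smul, smul_smul, ← add_smul]
      have : (eig n m - eig n l)⁻¹ * -eig n l + eig n m * (eig n m - eig n l)⁻¹ = 1 := by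
        field_simp; ring
      rw [this, one_smul]
    | zero => exact ⟨0, Submodule.zero_mem _, by simp⟩
    | add p q _ _ hp hq =>
      obtain ⟨y, hy, rfl⟩ := hp
      obtain ⟨z, hz, rfl⟩ := hq
      exact ⟨y + z, Submodule.add_mem _ hy hz, by rw [map_add, smul_add]; abel⟩
    | smul c p _ hp =>
      obtain ⟨y, hy, rfl⟩ := hp
      exact ⟨c • y, Submodule.smul_mem _ _ hy, by rw [map_smul, smul_add, smul_comm c (eig n m)]⟩
  have hrhs : ((m : ℝ) * (m - 1)) • Polynomial.X ^ (m - 2) ∈ eigSpan n m := by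
    rcases m with _ | _ | k
    · simp
    · simp
    · exact Submodule.smul_mem _ _ (mono (by omega) (ih k (by omega)))
  obtain ⟨y, hy, he⟩ := solve _ hrhs
  have h1 : Polynomial.X ^ m - y ∈ eigSpan n (m + 1) := by
    refine Submodule.subset_span ⟨m, Nat.lt_succ_self m, ?_⟩
    have := zonL_X_pow (n := n) m
    rw [← he] at this
    rw [map_sub, neg_smul, smul_sub, ← sub_eq_zero, ← sub_eq_zero.2 this]
    abel
  simpa using Submodule.add_mem _ h1 (mono (Nat.le_succ m) hy)

lemma mem_span_eig (hn : 3 ≤ n) (p : Polynomial ℝ) :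
    p ∈ Submodule.span ℝ {p | ∃ l : ℕ, zonL n p = -eig n l • p} := by
  induction p using Polynomial.induction_on' with
  | add p q hp hq => exact Submodule.add_mem _ hp hq
  | monomial m a =>
    rw [← Polynomial.C_mul_X_pow_eq_monomial, ← Polynomial.smul_eq_C_mul]
    refine Submodule.smul_mem _ _ (Submodule.span_mono ?_ (X_pow_mem_eigSpan hn m))
    rintro p ⟨l, _, h⟩
    exact ⟨l, h⟩

end

/-! ### Recovering moments from the boundary -/

section
variable {n : ℕ} {u : E n → ℝ}

/-- The Poisson representation tested against a test function `Φ`: the moment of `u` at radius `s`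
is the boundary pairing of `u` with the Poisson extension of `Φ`. -/
def Rep (u Φ : E n → ℝ) (s : ℝ) : Prop :=
  ContinuousOn Φ (sphere (0 : E n) 1) ∧
  ContinuousOn (fun ζ => mom (fun x => Ph n x ζ) Φ s) (sphere (0 : E n) 1) ∧
    Tendsto (fun r : ℝ => ∫ ζ, u (r • ζ) * mom (fun x => Ph n x ζ) Φ s ∂(sphMeasure n))
      (𝓝[<] (1 : ℝ))
      (𝓝 (mom u Φ s))

/-- For an eigenfunction, both the Poisson extension and the moments of `u` are multiples of one
radial solution, by uniqueness. -/
lemma rep_eigen (hn : 3 ≤ n) (hu : ContDiffOn ℝ 2 u (ball (0 : E n) 1)) (hH : HHarmonic n u)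
    (hbd : HasBoundaryDistribution n u) {Φ : E n → ℝ} (hΦ : ContDiff ℝ ∞ Φ) {lam : ℝ}
    (hlam : 0 ≤ lam) (he : ∀ ζ ∈ sphere (0 : E n) 1, sphLap Φ ζ = -lam * Φ ζ) {s : ℝ}
    (hs : s ∈ Ioo (0 : ℝ) 1) : Rep u Φ s := by
  have hΦc : ContinuousOn Φ (sphere (0 : E n) 1) := hΦ.continuous.continuousOn
  refine ⟨hΦc, ?_⟩
  by_cases hz : ∃ ζ₀ ∈ sphere (0 : E n) 1, Φ ζ₀ ≠ 0
  · obtain ⟨ζ₀, hζ₀, hne⟩ := hz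
    have hrad : ∀ ζ ∈ sphere (0 : E n) 1, IsRad n lam (mom (fun x => Ph n x ζ) Φ) := fun ζ hζ =>
      isRad_mom hn (contDiffOn_Ph hζ) (hHarmonic_Ph hn hζ) (smooth2 hΦ) he
    set f := mom (fun x => Ph n x ζ₀) Φ s / Φ ζ₀ with hf
    have h1 : ∀ ζ ∈ sphere (0 : E n) 1, mom (fun x => Ph n x ζ) Φ s = Φ ζ * f := by
      intro ζ hζ
      have := (hrad ζ hζ).unique hn hlam (hrad ζ₀ hζ₀) (tendsto_mom_Ph hn hζ hΦc)
        (tendsto_mom_Ph hn hζ₀ hΦc) hs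
      rw [hf, mul_div_assoc', eq_div_iff hne, ← this, mul_comm]
    refine ⟨(hΦc.mul continuousOn_const).congr h1, ?_⟩
    obtain ⟨L, hL⟩ := hbd Φ hΦ
    have h2 : mom u Φ s = L * f := by
      have := (isRad_mom hn hu hH (smooth2 hΦ) he).unique hn hlam (hrad ζ₀ hζ₀) hL
        (tendsto_mom_Ph hn hζ₀ hΦc) hs
      rw [hf, mul_div_assoc', eq_div_iff hne, ← this, mul_comm]
    rw [h2]
    refine (hL.mul_const f).congr fun r => ?_
    rw [← integral_mul_const]
    refine integral_congr_sph fun ζ hζ => ?_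
    rw [h1 ζ hζ]; ring
  · have hz : ∀ ζ ∈ sphere (0 : E n) 1, Φ ζ = 0 := by
      intro ζ hζ; by_contra h; exact hz ⟨ζ, hζ, h⟩
    have h0 : ∀ v : E n → ℝ, mom v Φ s = 0 := by
      intro v
      rw [mom, integral_congr_sph (g := fun _ => 0) fun ζ hζ => by rw [hz ζ hζ, mul_zero]]
      simp
    simp [h0, continuousOn_const]

lemma mom_lin (hn : 3 ≤ n) (hu : ContDiffOn ℝ 2 u (ball (0 : E n) 1)) {Φ Ψ : E n → ℝ}
    (hΦ : ContinuousOn Φ (sphere (0 : E n) 1)) (hΨ : ContinuousOn Ψ (sphere (0 : E n) 1)) {s : ℝ}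
    (hs : s ∈ Ioo (0 : ℝ) 1) (a b : ℝ) :
    mom u (fun η => a * Φ η + b * Ψ η) s = a * mom u Φ s + b * mom u Ψ s := by
  have hc := continuousOn_smul_sph hu (r := s) ⟨by linarith [hs.1], hs.2⟩
  have i1 : Integrable (fun ζ => u (s • ζ) * Φ ζ) (sphMeasure n) := integrable_sph hn (hc.mul hΦ)
  have i2 : Integrable (fun ζ => u (s • ζ) * Ψ ζ) (sphMeasure n) := integrable_sph hn (hc.mul hΨ)
  rw [mom, mom, mom, ← integral_const_mul, ← integral_const_mul,
    ← integral_add (i1.const_mul a) (i2.const_mul b)]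
  refine integral_congr_sph fun ζ _ => ?_
  ring

lemma Rep.lin (hn : 3 ≤ n) (hu : ContDiffOn ℝ 2 u (ball (0 : E n) 1)) {Φ Ψ : E n → ℝ} {s : ℝ}
    (hs : s ∈ Ioo (0 : ℝ) 1) (hΦ : Rep u Φ s) (hΨ : Rep u Ψ s) (a b : ℝ) :
    Rep u (fun η => a * Φ η + b * Ψ η) s := by
  obtain ⟨h1, h2, h3⟩ := hΦ
  obtain ⟨k1, k2, k3⟩ := hΨ
  have e : ∀ ζ ∈ sphere (0 : E n) 1, mom (fun x => Ph n x ζ) (fun η => a * Φ η + b * Ψ η) s =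
      a * mom (fun x => Ph n x ζ) Φ s + b * mom (fun x => Ph n x ζ) Ψ s := fun ζ hζ =>
    mom_lin hn (contDiffOn_Ph hζ) h1 k1 hs a b
  refine ⟨(continuousOn_const.mul h1).add (continuousOn_const.mul k1),
    ((continuousOn_const.mul h2).add (continuousOn_const.mul k2)).congr e, ?_⟩
  rw [mom_lin hn hu h1 k1 hs]
  refine ((h3.const_mul a).add (k3.const_mul b)).congr' ?_
  filter_upwards [Ioo_mem_nhdsLT (show (0 : ℝ) < 1 by norm_num)] with r hr
  have hc := continuousOn_smul_sph hu (r := r) ⟨by linarith [hr.1], hr.2⟩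
  have i1 : Integrable (fun ζ => u (r • ζ) * mom (fun x => Ph n x ζ) Φ s) (sphMeasure n) :=
    integrable_sph hn (hc.mul h2)
  have i2 : Integrable (fun ζ => u (r • ζ) * mom (fun x => Ph n x ζ) Ψ s) (sphMeasure n) :=
    integrable_sph hn (hc.mul k2)
  rw [← integral_const_mul, ← integral_const_mul,
    ← integral_add (i1.const_mul a) (i2.const_mul b)]
  refine integral_congr_sph fun ζ hζ => ?_
  rw [e ζ hζ]; ring

lemma rep_zonal (hn : 3 ≤ n) (hu : ContDiffOn ℝ 2 u (ball (0 : E n) 1)) (hH : HHarmonic n u)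
    (hbd : HasBoundaryDistribution n u) (p : Polynomial ℝ) {ξ : E n} (hξ : ξ ∈ sphere (0 : E n) 1)
    {s : ℝ} (hs : s ∈ Ioo (0 : ℝ) 1) : Rep u (fun η => p.eval (inner ℝ ξ η)) s := by
  have hL : ∀ i j, Lder i j (fun _ : E n => (0 : ℝ)) = fun _ => 0 := by
    intro i j; ext x; simp [Lder]
  have h0 : Rep u (fun _ => 0) s :=
    rep_eigen hn hu hH hbd contDiff_const le_rfl (fun ζ _ => by simp [sphLap, hL]) hs
  induction mem_span_eig hn p using Submodule.span_induction with
  | mem p hp =>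
    obtain ⟨l, hl⟩ := hp
    refine rep_eigen hn hu hH hbd (contDiff_zonal p ξ) (eig_nonneg hn l) (fun ζ hζ => ?_) hs
    rw [sphLap_zonal p hξ hζ, hl, Polynomial.eval_smul, smul_eq_mul]
  | zero => simpa using h0
  | add p q _ _ hp hq => simpa using hp.lin hn hu hs hq 1 1
  | smul c p _ hp => simpa using hp.lin hn hu hs h0 c 1

lemma continuousOn_Ph_prod {s : ℝ} (hs : s ∈ Ioo (0 : ℝ) 1) :
    ContinuousOn (fun p : E n × E n => Ph n (s • p.1) p.2)
      (sphere (0 : E n) 1 ×ˢ sphere (0 : E n) 1) := by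
  unfold Ph
  refine (ContinuousOn.div (by fun_prop) (by fun_prop) fun p hp => ?_).pow _
  exact (norm_sub_sq_pos hp.2 (smul_mem_ball ⟨by linarith [hs.1], hs.2⟩ hp.1)).ne'

lemma fubini_Ph (hn : 3 ≤ n) {Φ g : E n → ℝ} (hΦ : ContinuousOn Φ (sphere (0 : E n) 1))
    (hg : ContinuousOn g (sphere (0 : E n) 1)) {s : ℝ} (hs : s ∈ Ioo (0 : ℝ) 1) :
    ∫ ζ, g ζ * mom (fun x => Ph n x ζ) Φ s ∂(sphMeasure n) =
      ∫ η, Φ η * ∫ ζ, g ζ * Ph n (s • η) ζ ∂(sphMeasure n) ∂(sphMeasure n) := by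
  have := isProbabilityMeasure_sph hn
  have hc : ContinuousOn (fun p : E n × E n => g p.1 * (Ph n (s • p.2) p.1 * Φ p.2))
      (sphere (0 : E n) 1 ×ˢ sphere (0 : E n) 1) :=
    (hg.comp continuousOn_fst fun p hp => hp.1).mul
      (((continuousOn_Ph_prod hs).comp (f := fun p : E n × E n => (p.2, p.1)) (by fun_prop)
        fun p hp => ⟨hp.2, hp.1⟩).mul (hΦ.comp continuousOn_snd fun p hp => hp.2))
  have hi : Integrable (fun p : E n × E n => g p.1 * (Ph n (s • p.2) p.1 * Φ p.2))
      ((sphMeasure n).prod (sphMeasure n)) := by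
    have := hc.integrableOn_compact (μ := (sphMeasure n).prod (sphMeasure n))
      ((isCompact_sphere _ _).prod (isCompact_sphere _ _))
    rwa [IntegrableOn, ← Measure.prod_restrict, restrict_sph] at this
  have h1 := integral_integral_swap (f := fun ζ η => g ζ * (Ph n (s • η) ζ * Φ η)) hi
  simp only [mom, ← integral_const_mul]
  rw [h1]
  congr 1; ext η; congr 1; ext ζ; ring

/-- A bound near the boundary for the pairing of `u` with Poisson kernels bounds all zonal moments,
first for polynomial profiles. -/
lemma zonal_bound_poly (hn : 3 ≤ n) (hu : ContDiffOn ℝ 2 u (ball (0 : E n) 1)) (hH : HHarmonic n u)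
    (hbd : HasBoundaryDistribution n u) {s B : ℝ} (hs : s ∈ Ioo (0 : ℝ) 1)
    (hB : ∀ᶠ r in 𝓝[<] (1 : ℝ), ∀ η ∈ sphere (0 : E n) 1,
      |∫ ζ, u (r • ζ) * Ph n (s • η) ζ ∂(sphMeasure n)| ≤ B)
    (p : Polynomial ℝ) {ξ : E n} (hξ : ξ ∈ sphere (0 : E n) 1) :
    |mom u (fun η => p.eval (inner ℝ ξ η)) s| ≤
      B * ∫ η, |p.eval (inner ℝ ξ η)| ∂(sphMeasure n) := by
  obtain ⟨h1, h2, h3⟩ := rep_zonal hn hu hH hbd p hξ hs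
  refine le_of_tendsto h3.abs ?_
  filter_upwards [Ioo_mem_nhdsLT (show (0 : ℝ) < 1 by norm_num), hB] with r hr hBr
  rw [fubini_Ph hn h1 (continuousOn_smul_sph hu ⟨by linarith [hr.1], hr.2⟩) hs,
    ← integral_const_mul]
  refine abs_integral_le_integral_abs.trans ?_
  refine integral_mono_of_nonneg (Eventually.of_forall fun _ => abs_nonneg _)
    ((integrable_sph hn h1.abs).const_mul B) ((ae_sph n).mono fun η hη => ?_)
  simp only [abs_mul]
  rw [mul_comm]
  exact mul_le_mul_of_nonneg_right (hBr η hη) (abs_nonneg _)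

lemma inner_mem_Icc {ξ η : E n} (hξ : ξ ∈ sphere (0 : E n) 1) (hη : η ∈ sphere (0 : E n) 1) :
    inner ℝ ξ η ∈ Icc (-1 : ℝ) 1 := by
  have := abs_real_inner_le_norm ξ η
  rw [mem_sphere_zero_iff_norm.1 hξ, mem_sphere_zero_iff_norm.1 hη, mul_one] at this
  exact abs_le.1 this

lemma zonal_bound (hn : 3 ≤ n) (hu : ContDiffOn ℝ 2 u (ball (0 : E n) 1)) (hH : HHarmonic n u)
    (hbd : HasBoundaryDistribution n u) {s B : ℝ} (hs : s ∈ Ioo (0 : ℝ) 1) (hB0 : 0 ≤ B)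
    (hB : ∀ᶠ r in 𝓝[<] (1 : ℝ), ∀ η ∈ sphere (0 : E n) 1,
      |∫ ζ, u (r • ζ) * Ph n (s • η) ζ ∂(sphMeasure n)| ≤ B)
    {κ : ℝ → ℝ} (hκ : ContinuousOn κ (Icc (-1) 1)) {ξ : E n} (hξ : ξ ∈ sphere (0 : E n) 1) :
    |mom u (fun η => κ (inner ℝ ξ η)) s| ≤ B * ∫ η, |κ (inner ℝ ξ η)| ∂(sphMeasure n) := by
  have := isProbabilityMeasure_sph hn
  have hc := continuousOn_smul_sph hu (r := s) ⟨by linarith [hs.1], hs.2⟩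
  obtain ⟨M, hM⟩ := (isCompact_sphere (0 : E n) 1).exists_bound_of_continuousOn hc
  have hM0 : 0 ≤ M := (norm_nonneg _).trans (hM ξ hξ)
  have hκc : ContinuousOn (fun η => κ (inner ℝ ξ η)) (sphere (0 : E n) 1) :=
    hκ.comp (by fun_prop) fun η hη => inner_mem_Icc hξ hη
  refine le_of_forall_pos_le_add fun ε hε => ?_
  set δ := ε / (B + M + 1) with hδ
  have hδ0 : 0 < δ := by positivity
  obtain ⟨p, hp⟩ := exists_polynomial_near_of_continuousOn (-1) 1 κ hκ δ hδ0
  have hpc : ContinuousOn (fun η : E n => p.eval (inner ℝ ξ η)) (sphere (0 : E n) 1) :=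
    (contDiff_zonal p ξ (k := 0)).continuous.continuousOn
  have hpt : ∀ η ∈ sphere (0 : E n) 1, |p.eval (inner ℝ ξ η) - κ (inner ℝ ξ η)| ≤ δ :=
    fun η hη => (hp _ (inner_mem_Icc hξ hη)).le
  have e1 : |mom u (fun η => κ (inner ℝ ξ η)) s| ≤
      |mom u (fun η => p.eval (inner ℝ ξ η)) s| + M * δ := by
    have h : |mom u (fun η => κ (inner ℝ ξ η)) s - mom u (fun η => p.eval (inner ℝ ξ η)) s| ≤
        M * δ := by
      have i1 : Integrable (fun ζ => u (s • ζ) * κ (inner ℝ ξ ζ)) (sphMeasure n) :=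
        integrable_sph hn (hc.mul hκc)
      have i2 : Integrable (fun ζ => u (s • ζ) * p.eval (inner ℝ ξ ζ)) (sphMeasure n) :=
        integrable_sph hn (hc.mul hpc)
      rw [mom, mom, ← integral_sub i1 i2]
      refine abs_integral_sph_le hn fun η hη => ?_
      rw [← mul_sub, abs_mul, abs_sub_comm]
      exact mul_le_mul (hM η hη) (hpt η hη) (abs_nonneg _) hM0
    have := abs_sub_abs_le_abs_sub (mom u (fun η => κ (inner ℝ ξ η)) s)
      (mom u (fun η => p.eval (inner ℝ ξ η)) s)
    linarith
  have e2 : ∫ η, |p.eval (inner ℝ ξ η)| ∂(sphMeasure n) ≤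
      ∫ η, |κ (inner ℝ ξ η)| ∂(sphMeasure n) + δ := by
    have : ∫ η, (|κ (inner ℝ ξ η)| + δ) ∂(sphMeasure n) =
        ∫ η, |κ (inner ℝ ξ η)| ∂(sphMeasure n) + δ := by
      rw [integral_add (integrable_sph hn hκc.abs) (integrable_const _), integral_const]
      simp
    rw [← this]
    refine integral_mono_sph hn hpc.abs (hκc.abs.add continuousOn_const) fun η hη => ?_
    have := abs_sub_abs_le_abs_sub (p.eval (inner ℝ ξ η)) (κ (inner ℝ ξ η))
    linarith [hpt η hη]
  have e3 := zonal_bound_poly hn hu hH hbd hs hB p hξ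
  have e4 := mul_le_mul_of_nonneg_left e2 hB0
  have e5 : (B + M) * δ ≤ ε := by
    rw [hδ, mul_div_assoc', div_le_iff₀ (by positivity)]
    nlinarith
  nlinarith

/-- Concentrating the profile at `ξ` bounds `u` itself. -/
lemma pointwise_bound (hn : 3 ≤ n) (hu : ContDiffOn ℝ 2 u (ball (0 : E n) 1)) (hH : HHarmonic n u)
    (hbd : HasBoundaryDistribution n u) {s B : ℝ} (hs : s ∈ Ioo (0 : ℝ) 1) (hB0 : 0 ≤ B)
    (hB : ∀ᶠ r in 𝓝[<] (1 : ℝ), ∀ η ∈ sphere (0 : E n) 1,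
      |∫ ζ, u (r • ζ) * Ph n (s • η) ζ ∂(sphMeasure n)| ≤ B)
    {ξ : E n} (hξ : ξ ∈ sphere (0 : E n) 1) : |u (s • ξ)| ≤ B := by
  have hc := continuousOn_smul_sph hu (r := s) ⟨by linarith [hs.1], hs.2⟩
  refine le_of_tendsto (tendsto_mom_Ph hn hξ hc).abs ?_
  filter_upwards [Ioo_mem_nhdsLT (show (0 : ℝ) < 1 by norm_num)] with t ht
  have hκ : ContinuousOn (prof n t) (Icc (-1) 1) := by
    unfold prof
    refine (ContinuousOn.div (by fun_prop) (by fun_prop) fun x hx => ?_).pow _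
    have h1 := ht.1
    have h2 := ht.2
    have h3 := hx.2
    have h4 : t * x ≤ t * 1 := mul_le_mul_of_nonneg_left h3 h1.le
    have h5 : 0 < (1 - t) * (1 - t) := mul_pos (by linarith) (by linarith)
    exact ne_of_gt (by nlinarith)
  have h := zonal_bound hn hu hH hbd hs hB0 hB hκ hξ
  have e : ∀ η ∈ sphere (0 : E n) 1, prof n t (inner ℝ ξ η) = Ph n (t • η) ξ := by
    intro η hη; rw [Ph_smul hη hξ, real_inner_comm]
  have e1 : mom u (fun η => prof n t (inner ℝ ξ η)) s = mom (fun x => Ph n x ξ) (fun ζ => u (s • ζ)) t := by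
    refine integral_congr_sph fun η hη => ?_
    show u (s • η) * prof n t (inner ℝ ξ η) = Ph n (t • η) ξ * u (s • η)
    rw [e η hη, mul_comm]
  have e2 : ∫ η, |prof n t (inner ℝ ξ η)| ∂(sphMeasure n) = 1 := by
    rw [← mom_Ph_one hn hξ ht]
    refine integral_congr_sph fun η hη => ?_
    rw [e η hη, abs_of_nonneg (Ph_nonneg (smul_mem_ball ⟨by linarith [ht.1], ht.2⟩ hη))]
  rwa [e1, e2, mul_one] at h

end

/-! ### Zonal moments grow polynomially, uniformly near the boundary -/

section
variable {n : ℕ} {u : E n → ℝ}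

/-- There is a smooth compactly supported map into the closed unit ball which is the identity on
the sphere. -/
lemma exists_retraction (n : ℕ) : ∃ T : E n → E n, ContDiff ℝ ∞ T ∧ HasCompactSupport T ∧
    (∀ x, ‖T x‖ ≤ 1) ∧ ∀ x ∈ sphere (0 : E n) 1, T x = x := by
  let χ : ContDiffBump (0 : E n) := ⟨1, 2, one_pos, one_lt_two⟩
  have hpos : ∀ x : E n, 0 < 1 + ‖x‖ ^ 2 := fun x => by positivity
  refine ⟨fun x => χ x • ((2 / (1 + ‖x‖ ^ 2)) • x), ?_, ?_, fun x => ?_, fun x hx => ?_⟩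
  · exact χ.contDiff.smul ((contDiff_const.div (contDiff_const.add (contDiff_norm_sq ℝ))
      fun x => (hpos x).ne').smul contDiff_id)
  · exact χ.hasCompactSupport.smul_right
  · rw [norm_smul, norm_smul, Real.norm_of_nonneg χ.nonneg,
      Real.norm_of_nonneg (div_pos two_pos (hpos x)).le]
    have h : 2 / (1 + ‖x‖ ^ 2) * ‖x‖ ≤ 1 := by
      rw [div_mul_eq_mul_div, div_le_one (hpos x)]
      nlinarith [sq_nonneg (‖x‖ - 1)]
    calc _ ≤ 1 * (1 : ℝ) := mul_le_mul χ.le_one h (by positivity) zero_le_one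
      _ = 1 := one_mul 1
  · rw [mem_sphere_zero_iff_norm] at hx
    have : χ x = 1 := χ.one_of_mem_closedBall (by
      rw [mem_closedBall_zero_iff, hx])
    simp only [this, hx]
    norm_num

/-- Each derivative of the powers `⟨ξ, T x⟩ ^ m` grows at most polynomially in `m`, uniformly in
the unit vector `ξ`. -/
lemma iteratedFDeriv_pow_bound {T : E n → E n} (hT : ContDiff ℝ ∞ T) (hTc : HasCompactSupport T)
    (hT1 : ∀ x, ‖T x‖ ≤ 1) (N : ℕ) : ∃ C : ℝ, ∀ ξ ∈ sphere (0 : E n) 1, ∀ m : ℕ, ∀ x,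
      ‖iteratedFDeriv ℝ N (fun x => (inner ℝ ξ (T x)) ^ m) x‖ ≤ C * (1 + (m : ℝ)) ^ N := by
  have hb : ∀ i : ℕ, ∃ C : ℝ, ∀ x, ‖iteratedFDeriv ℝ i T x‖ ≤ C := fun i =>
    (hTc.iteratedFDeriv i).exists_bound_of_continuous
      (hT.continuous_iteratedFDeriv (by exact_mod_cast le_top))
  choose K hK using hb
  set D : ℝ := 1 + ∑ i ∈ Finset.range (N + 1), |K i| with hD
  have hD1 : 1 ≤ D := le_add_of_nonneg_right (Finset.sum_nonneg fun _ _ => abs_nonneg _)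
  refine ⟨N.factorial * D ^ N, fun ξ hξ m x => ?_⟩
  have hξ' := mem_sphere_zero_iff_norm.1 hξ
  have hf : ContDiff ℝ ∞ (fun x => inner ℝ ξ (T x)) := contDiff_const.inner ℝ hT
  have h := norm_iteratedFDeriv_comp_le (𝕜 := ℝ) (g := fun t : ℝ => t ^ m)
    (f := fun x => inner ℝ ξ (T x)) (n := N) (N := ∞) (contDiff_id.pow m) hf
    (by exact_mod_cast le_top) x (C := (1 + (m : ℝ)) ^ N) (D := D) (fun i hi => ?_)
    (fun i h1 hi => ?_)
  · refine h.trans (le_of_eq ?_); ring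
  · rw [norm_iteratedFDeriv_eq_norm_iteratedDeriv, iteratedDeriv_pow, norm_mul, norm_pow]
    have h1 : ‖inner ℝ ξ (T x)‖ ≤ 1 := (norm_inner_le_norm _ _).trans (by
      rw [hξ', one_mul]; exact hT1 x)
    have h2 : ‖((m.descFactorial i : ℕ) : ℝ)‖ ≤ (m : ℝ) ^ i := by
      rw [Real.norm_of_nonneg (Nat.cast_nonneg _)]
      exact_mod_cast Nat.descFactorial_le_pow m i
    calc _ ≤ (m : ℝ) ^ i * 1 :=
          mul_le_mul h2 (pow_le_one₀ (norm_nonneg _) h1) (by positivity) (by positivity)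
      _ ≤ (1 + (m : ℝ)) ^ i := by rw [mul_one]; gcongr; linarith
      _ ≤ (1 + (m : ℝ)) ^ N := pow_le_pow_right₀ (by linarith [Nat.cast_nonneg (α := ℝ) m]) hi
  · have h1 := (innerSL ℝ ξ).norm_iteratedFDeriv_comp_left (f := T) (x := x) (N := ∞) (n := i)
      hT.contDiffAt (by exact_mod_cast le_top)
    rw [innerSL_apply_norm, hξ', one_mul] at h1
    calc _ ≤ ‖iteratedFDeriv ℝ i T x‖ := h1
      _ ≤ |K i| := (hK i x).trans (le_abs_self _)
      _ ≤ ∑ i ∈ Finset.range (N + 1), |K i| := Finset.single_le_sum (f := fun i => |K i|)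
          (fun _ _ => abs_nonneg _) (Finset.mem_range.2 (by omega))
      _ ≤ D := by rw [hD]; linarith
      _ ≤ D ^ i := le_self_pow₀ hD1 (by omega)

/-- The test function `∑ₖ aₖ (1 + mₖ)⁻ᵏ ⟨ξₖ, T x⟩ ^ mₖ` attached to a summable sequence `a`. -/
def Wsum (T : E n → E n) (ξ : ℕ → E n) (m : ℕ → ℕ) (a : ℕ → ℝ) (x : E n) : ℝ :=
  ∑' k, a k * (((1 + (m k : ℝ)) ^ k)⁻¹ * (inner ℝ (ξ k) (T x)) ^ m k)

lemma abs_term_le {T : E n → E n} (hT1 : ∀ x, ‖T x‖ ≤ 1) {ξ : E n} (hξ : ξ ∈ sphere (0 : E n) 1)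
    (m k : ℕ) (x : E n) : |((1 + (m : ℝ)) ^ k)⁻¹ * (inner ℝ ξ (T x)) ^ m| ≤ 1 := by
  have h1 : |inner ℝ ξ (T x)| ≤ 1 := (abs_real_inner_le_norm _ _).trans (by
    rw [mem_sphere_zero_iff_norm.1 hξ, one_mul]; exact hT1 x)
  have h2 : (1 : ℝ) ≤ (1 + (m : ℝ)) ^ k := one_le_pow₀ (by linarith [Nat.cast_nonneg (α := ℝ) m])
  rw [abs_mul, abs_inv, abs_of_pos (by linarith), abs_pow]
  exact mul_le_one₀ (inv_le_one_of_one_le₀ h2) (by positivity) (pow_le_one₀ (abs_nonneg _) h1)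

lemma summable_term {T : E n → E n} (hT1 : ∀ x, ‖T x‖ ≤ 1) {ξ : ℕ → E n}
    (hξ : ∀ k, ξ k ∈ sphere (0 : E n) 1) (m : ℕ → ℕ) {a : ℕ → ℝ} (ha : Summable fun k => |a k|)
    (x : E n) :
    Summable fun k => a k * (((1 + (m k : ℝ)) ^ k)⁻¹ * (inner ℝ (ξ k) (T x)) ^ m k) := by
  refine Summable.of_norm_bounded ha fun k => ?_
  rw [Real.norm_eq_abs, abs_mul]
  exact mul_le_of_le_one_right (abs_nonneg _) (abs_term_le hT1 (hξ k) _ _ _)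

lemma abs_Wsum_le {T : E n → E n} (hT1 : ∀ x, ‖T x‖ ≤ 1) {ξ : ℕ → E n}
    (hξ : ∀ k, ξ k ∈ sphere (0 : E n) 1) (m : ℕ → ℕ) {a : ℕ → ℝ} (ha : Summable fun k => |a k|)
    (x : E n) : |Wsum T ξ m a x| ≤ ∑' k, |a k| := by
  refine tsum_of_norm_bounded (f := fun k => a k * (((1 + (m k : ℝ)) ^ k)⁻¹ *
    (inner ℝ (ξ k) (T x)) ^ m k)) ha.hasSum fun k => ?_
  rw [Real.norm_eq_abs, abs_mul]
  exact mul_le_of_le_one_right (abs_nonneg _) (abs_term_le hT1 (hξ k) _ _ _)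

lemma contDiff_Wsum {T : E n → E n} (hT : ContDiff ℝ ∞ T) (hTc : HasCompactSupport T)
    (hT1 : ∀ x, ‖T x‖ ≤ 1) {ξ : ℕ → E n} (hξ : ∀ k, ξ k ∈ sphere (0 : E n) 1) (m : ℕ → ℕ)
    {a : ℕ → ℝ} (ha : Summable fun k => |a k|) : ContDiff ℝ ∞ (Wsum T ξ m a) := by
  choose C hC using fun N => iteratedFDeriv_pow_bound hT hTc hT1 N
  have hs : ∀ k, ContDiff ℝ ∞ (fun x => (inner ℝ (ξ k) (T x)) ^ m k) := fun k =>
    (contDiff_const.inner ℝ hT).pow _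
  refine contDiff_tsum_of_eventually (v := fun N k => |a k| * |C N|)
    (fun k => contDiff_const.mul (contDiff_const.mul (hs k))) (fun N _ => ha.mul_right _)
    fun N _ => ?_
  -- For `k ≥ N` the weight `(1 + mₖ)⁻ᵏ` absorbs the growth of the `N`-th derivative.
  have hev : ∀ᶠ k : ℕ in cofinite, N ≤ k := by
    rw [Nat.cofinite_eq_atTop]; exact eventually_ge_atTop N
  filter_upwards [hev] with k hk x
  have e : (fun x => a k * (((1 + (m k : ℝ)) ^ k)⁻¹ * (inner ℝ (ξ k) (T x)) ^ m k)) =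
      (a k * ((1 + (m k : ℝ)) ^ k)⁻¹) • fun x => (inner ℝ (ξ k) (T x)) ^ m k := by
    ext x; simp [mul_assoc]
  have h1 : (1 : ℝ) ≤ 1 + (m k : ℝ) := by linarith [Nat.cast_nonneg (α := ℝ) (m k)]
  have h0 : 0 < (1 + (m k : ℝ)) ^ k := by positivity
  rw [e, iteratedFDeriv_const_smul_apply ((hs k).contDiffAt.of_le (by exact_mod_cast le_top)),
    norm_smul, norm_mul, norm_inv, Real.norm_of_nonneg h0.le, Real.norm_eq_abs, mul_assoc]
  refine mul_le_mul_of_nonneg_left ?_ (abs_nonneg _)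
  rw [inv_mul_le_iff₀ h0]
  calc _ ≤ C N * (1 + (m k : ℝ)) ^ N := hC N _ (hξ k) _ _
    _ ≤ |C N| * (1 + (m k : ℝ)) ^ k :=
      mul_le_mul (le_abs_self _) (pow_le_pow_right₀ h1 hk) (by positivity) (abs_nonneg _)
    _ = _ := mul_comm _ _

lemma summable_abs_lp (a : lp (fun _ : ℕ => ℝ) 1) : Summable fun k => |a k| := by
  have := (memℓp_gen_iff (p := 1) (by simp)).1 (lp.memℓp a)
  simpa using this

lemma norm_lp_one (a : lp (fun _ : ℕ => ℝ) 1) : ‖a‖ = ∑' k, |a k| := by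
  rw [lp.norm_eq_tsum_rpow (by simp)]
  simp

/-- Moments of `u` against the weighted sums are continuous linear functionals on `ℓ¹`. -/
lemma exists_functional (hn : 3 ≤ n) (hu : ContDiffOn ℝ 2 u (ball (0 : E n) 1)) {T : E n → E n}
    (hT : ContDiff ℝ ∞ T) (hTc : HasCompactSupport T) (hT1 : ∀ x, ‖T x‖ ≤ 1) {ξ : ℕ → E n}
    (hξ : ∀ k, ξ k ∈ sphere (0 : E n) 1) (m : ℕ → ℕ) {r : ℝ} (hr : r ∈ Ioo (0 : ℝ) 1) :
    ∃ g : lp (fun _ : ℕ => ℝ) 1 →L[ℝ] ℝ, ∀ a, g a = mom u (Wsum T ξ m a) r := by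
  have hc := continuousOn_smul_sph hu (r := r) ⟨by linarith [hr.1], hr.2⟩
  obtain ⟨M, hM⟩ := (isCompact_sphere (0 : E n) 1).exists_bound_of_continuousOn hc
  have hM0 : 0 ≤ M := (norm_nonneg _).trans (hM _ (hξ 0))
  have hW : ∀ a : lp (fun _ : ℕ => ℝ) 1, ContinuousOn (Wsum T ξ m a) (sphere (0 : E n) 1) :=
    fun a => (contDiff_Wsum hT hTc hT1 hξ m (summable_abs_lp a)).continuous.continuousOn
  have hadd : ∀ a b : lp (fun _ : ℕ => ℝ) 1, Wsum T ξ m (a + b) =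
      fun x => 1 * Wsum T ξ m a x + 1 * Wsum T ξ m b x := by
    intro a b; ext x
    rw [one_mul, one_mul, Wsum, Wsum, Wsum,
      ← (summable_term hT1 hξ m (summable_abs_lp a) x).tsum_add
        (summable_term hT1 hξ m (summable_abs_lp b) x)]
    refine tsum_congr fun k => ?_
    rw [Pi.add_apply]; ring
  have hsmul : ∀ (c : ℝ) (a : lp (fun _ : ℕ => ℝ) 1), Wsum T ξ m (c • a : lp (fun _ : ℕ => ℝ) 1) =
      fun x => c * Wsum T ξ m a x + 0 * Wsum T ξ m a x := by
    intro c a; ext x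
    rw [zero_mul, add_zero, Wsum, Wsum, ← tsum_mul_left]
    refine tsum_congr fun k => ?_
    rw [lp.coeFn_smul, Pi.smul_apply, smul_eq_mul, mul_assoc]
  refine ⟨LinearMap.mkContinuous
    { toFun := fun a => mom u (Wsum T ξ m a) r
      map_add' := fun a b => ?_
      map_smul' := fun c a => ?_ } M fun a => ?_, fun a => rfl⟩
  · rw [lp.coeFn_add, hadd, mom_lin hn hu (hW a) (hW b) hr, one_mul, one_mul]
  · rw [hsmul, mom_lin hn hu (hW a) (hW a) hr, zero_mul, add_zero]; rfl
  · refine abs_integral_sph_le hn fun ζ hζ => ?_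
    rw [abs_mul, norm_lp_one]
    exact mul_le_mul (hM ζ hζ) (abs_Wsum_le hT1 hξ m (summable_abs_lp a) ζ) (abs_nonneg _) hM0

/-- Were the zonal moments `∫ u(rζ)⟨ξ, ζ⟩ ^ m` not of uniformly polynomial growth in `m` for `r`
near `1`, the weighted sums would carry `ℓ¹` functionals that are pointwise but not uniformly
bounded, against the Banach–Steinhaus theorem. -/
lemma moment_growth (hn : 3 ≤ n) (hu : ContDiffOn ℝ 2 u (ball (0 : E n) 1))
    (hbd : HasBoundaryDistribution n u) : ∃ K : ℕ, ∀ ξ ∈ sphere (0 : E n) 1, ∀ m : ℕ,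
      ∀ r ∈ Ioo (1 - 1 / ((K : ℝ) + 2)) 1,
        |mom u (fun ζ => (inner ℝ ξ ζ) ^ m) r| ≤ K * (1 + (m : ℝ)) ^ K := by
  by_contra! hcon
  choose ξ hξ m r hr hbig using hcon
  obtain ⟨T, hT, hTc, hT1, hTid⟩ := exists_retraction n
  have hr0 : ∀ k, r k ∈ Ioo (0 : ℝ) 1 := by
    intro k
    refine ⟨?_, (hr k).2⟩
    have : 1 / ((k : ℝ) + 2) ≤ 1 := by
      rw [div_le_one (by positivity)]; linarith [Nat.cast_nonneg (α := ℝ) k]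
    linarith [(hr k).1]
  have hlim : Tendsto r atTop (𝓝[<] (1 : ℝ)) := by
    refine tendsto_nhdsWithin_iff.2 ⟨?_, Eventually.of_forall fun k => (hr k).2⟩
    have h0 : Tendsto (fun k : ℕ => 1 - 1 / ((k : ℝ) + 2)) atTop (𝓝 (1 - 0)) := by
      refine tendsto_const_nhds.sub ?_
      have := (tendsto_one_div_add_atTop_nhds_zero_nat (𝕜 := ℝ)).comp (tendsto_add_atTop_nat 1)
      refine this.congr fun k => ?_
      simp only [Function.comp_apply]; push_cast; ring_nf
    rw [sub_zero] at h0
    exact tendsto_of_tendsto_of_tendsto_of_le_of_le h0 tendsto_const_nhds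
      (fun k => (hr k).1.le) fun k => (hr k).2.le
  choose g hg using fun k => exists_functional hn hu hT hTc hT1 hξ m (hr0 k)
  obtain ⟨C, hC⟩ := banach_steinhaus (g := g) fun a => by
    obtain ⟨L, hL⟩ := hbd _ (contDiff_Wsum hT hTc hT1 hξ m (summable_abs_lp a))
    obtain ⟨C, hC⟩ := isBounded_iff_forall_norm_le.1
      (isBounded_range_of_tendsto _ (hL.comp hlim))
    refine ⟨C, fun k => ?_⟩
    rw [hg]
    exact hC _ ⟨k, rfl⟩
  obtain ⟨k, hk⟩ := exists_nat_gt C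
  set e : lp (fun _ : ℕ => ℝ) 1 := lp.single 1 k 1 with he
  have he1 : ‖e‖ = 1 := by rw [he, lp.norm_single one_pos]; simp
  have hW : ∀ x ∈ sphere (0 : E n) 1, Wsum T ξ m e x =
      ((1 + (m k : ℝ)) ^ k)⁻¹ * (inner ℝ (ξ k) x) ^ m k := by
    intro x hx
    rw [Wsum, tsum_eq_single k, he, lp.single_apply_self, one_mul, hTid x hx]
    intro j hj
    rw [he, lp.single_apply_ne _ _ _ hj, zero_mul]
  have h1 : |g k e| ≤ C := by
    have := (g k).le_of_opNorm_le (hC k) e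
    rwa [he1, mul_one] at this
  have h0 : 0 < (1 + (m k : ℝ)) ^ k := by positivity
  have h2 : g k e = ((1 + (m k : ℝ)) ^ k)⁻¹ * mom u (fun ζ => (inner ℝ (ξ k) ζ) ^ m k) (r k) := by
    rw [hg, mom, mom, ← integral_const_mul]
    refine integral_congr_sph fun ζ hζ => ?_
    rw [hW ζ hζ]; ring
  rw [h2, abs_mul, abs_inv, abs_of_pos h0, inv_mul_le_iff₀ h0] at h1
  have h3 := hbig k
  nlinarith

end

/-! ### Power series of the Poisson kernel and the growth estimate -/

section
variable {n : ℕ} {u : E n → ℝ}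

lemma choose_le_pow (m a : ℕ) : (m + a).choose a ≤ (m + 1) ^ a := by
  induction a with
  | zero => simp
  | succ a ih =>
    have h := Nat.add_one_mul_choose_eq (m + a) a
    have h2 : m + a + 1 ≤ (m + 1) * (a + 1) := by nlinarith
    refine le_of_mul_le_mul_right ?_ (show 0 < a + 1 by omega)
    calc (m + (a + 1)).choose (a + 1) * (a + 1) = (m + a + 1) * (m + a).choose a := h.symm
      _ ≤ (m + 1) * (a + 1) * (m + 1) ^ a := Nat.mul_le_mul h2 ih
      _ = _ := by ring

lemma pow_le_choose (m L : ℕ) : (m + 1) ^ L ≤ L.factorial * (m + L).choose L := by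
  rw [← Nat.ascFactorial_eq_factorial_mul_choose]
  exact Nat.pow_succ_le_ascFactorial (m + 1) L

lemma ratio_mem {s : ℝ} (hs : s ∈ Ioo (0 : ℝ) 1) : 2 * s / (1 + s ^ 2) ∈ Ioo (0 : ℝ) 1 := by
  have h : 0 < 1 + s ^ 2 := by positivity
  have h1 := hs.1
  refine ⟨by positivity, ?_⟩
  rw [div_lt_one h]
  nlinarith [mul_pos (sub_pos.2 hs.2) (sub_pos.2 hs.2)]

lemma hasSum_prof (hn : 3 ≤ n) {s t : ℝ} (hs : s ∈ Ioo (0 : ℝ) 1) (ht : t ∈ Icc (-1 : ℝ) 1) :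
    HasSum (fun m : ℕ => ((1 - s ^ 2) / (1 + s ^ 2)) ^ (n - 1) *
      (((m + (n - 2)).choose (n - 2) : ℕ) * (2 * s / (1 + s ^ 2)) ^ m * t ^ m)) (prof n s t) := by
  obtain ⟨q0, q1⟩ := ratio_mem hs
  set q := 2 * s / (1 + s ^ 2) with hq
  have ht' : |t| ≤ 1 := abs_le.2 ht
  have h1 : ‖q * t‖ < 1 := by
    rw [Real.norm_eq_abs, abs_mul, abs_of_pos q0]
    nlinarith
  have h := (hasSum_choose_mul_geometric_of_norm_lt_one (n - 2) h1).mul_left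
    (((1 - s ^ 2) / (1 + s ^ 2)) ^ (n - 1))
  have e : n - 2 + 1 = n - 1 := by omega
  rw [e] at h
  have hpos : 0 < 1 - q * t := by
    have := (abs_lt.1 h1).2; linarith
  have hs2 : 0 < 1 + s ^ 2 := by positivity
  have e2 : (1 - s ^ 2) / (1 + s ^ 2) * (1 / (1 - q * t)) =
      (1 - s ^ 2) / (1 + s ^ 2 - 2 * s * t) := by
    have : (1 + s ^ 2) * (1 - q * t) = 1 + s ^ 2 - 2 * s * t := by
      rw [hq]; field_simp
    rw [← this, div_mul_div_comm, mul_one]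
  rw [prof, ← e2, mul_pow, one_div_pow]
  refine h.congr_fun ?_
  intro m
  rw [mul_pow]; ring

/-- Expanding the Poisson kernel in powers of `⟨η, ζ⟩` turns the moment bounds into a bound for the
boundary pairing of `u` with the Poisson kernel. -/
lemma pairing_bound (hn : 3 ≤ n) (hu : ContDiffOn ℝ 2 u (ball (0 : E n) 1)) {K : ℕ} {r : ℝ}
    (hr : r ∈ Ioo (0 : ℝ) 1)
    (hK : ∀ ξ ∈ sphere (0 : E n) 1, ∀ m : ℕ,
        |mom u (fun ζ => (inner ℝ ξ ζ) ^ m) r| ≤ K * (1 + (m : ℝ)) ^ K)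
    {s : ℝ} (hs : s ∈ Ioo (0 : ℝ) 1) {η : E n} (hη : η ∈ sphere (0 : E n) 1) :
    |∫ ζ, u (r • ζ) * Ph n (s • η) ζ ∂(sphMeasure n)| ≤
      K * (K + (n - 2)).factorial * 2 ^ (K + (n - 2) + 1) *
        ((1 - s) ^ (2 * (K + (n - 2) + 1)))⁻¹ := by
  have := isProbabilityMeasure_sph hn
  have hc := continuousOn_smul_sph hu (r := r) ⟨by linarith [hr.1], hr.2⟩
  obtain ⟨M, hM⟩ := (isCompact_sphere (0 : E n) 1).exists_bound_of_continuousOn hc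
  have hM0 : 0 ≤ M := (norm_nonneg _).trans (hM _ hη)
  obtain ⟨q0, q1⟩ := ratio_mem hs
  have hprof := fun t ht => hasSum_prof (n := n) (t := t) hn hs ht
  set q := 2 * s / (1 + s ^ 2) with hq
  set w := ((1 - s ^ 2) / (1 + s ^ 2)) ^ (n - 1) with hw
  set L := K + (n - 2) with hL
  have hs1 := hs.1
  have hs2 := hs.2
  have hw0 : 0 ≤ w := by
    apply pow_nonneg; apply div_nonneg <;> nlinarith
  have hw1 : w ≤ 1 := by
    apply pow_le_one₀
    · apply div_nonneg <;> nlinarith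
    · rw [div_le_one (by positivity)]; nlinarith
  set c : ℕ → ℝ := fun m => w * (((m + (n - 2)).choose (n - 2) : ℕ) * q ^ m) with hcdef
  have hc0 : ∀ m, 0 ≤ c m := fun m => by positivity
  have hcs : Summable c :=
    ((hasSum_choose_mul_geometric_of_norm_lt_one (n - 2)
      (by rwa [Real.norm_of_nonneg q0.le] : ‖q‖ < 1)).mul_left w).summable
  have hpc : ∀ m : ℕ, ContinuousOn (fun ζ : E n => (inner ℝ η ζ) ^ m) (sphere (0 : E n) 1) :=
    fun m => by fun_prop
  have hsum : HasSum (fun m => ∫ ζ, c m * (u (r • ζ) * (inner ℝ η ζ) ^ m) ∂(sphMeasure n))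
      (∫ ζ, u (r • ζ) * Ph n (s • η) ζ ∂(sphMeasure n)) := by
    refine hasSum_integral_of_dominated_convergence (fun m _ => c m * M) (fun m => ?_) (fun m => ?_)
      (Eventually.of_forall fun _ => hcs.mul_right M) (integrable_const _) ?_
    · have : Integrable (fun ζ => u (r • ζ) * (inner ℝ η ζ) ^ m) (sphMeasure n) :=
        integrable_sph hn (hc.mul (hpc m))
      exact (this.const_mul (c m)).aestronglyMeasurable
    · refine (ae_sph n).mono fun ζ hζ => ?_
      rw [norm_mul (c m), norm_mul (u _), Real.norm_of_nonneg (hc0 m), norm_pow]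
      refine mul_le_mul_of_nonneg_left ?_ (hc0 m)
      have h1 : ‖inner ℝ η ζ‖ ≤ 1 := abs_le.2 (inner_mem_Icc hη hζ)
      calc _ ≤ M * (1 : ℝ) := mul_le_mul (hM ζ hζ) (pow_le_one₀ (norm_nonneg _) h1)
            (by positivity) hM0
        _ = M := mul_one M
    · refine (ae_sph n).mono fun ζ hζ => ?_
      rw [Ph_smul hη hζ]
      refine ((hprof _ (inner_mem_Icc hη hζ)).mul_left (u (r • ζ))).congr_fun fun m => ?_
      simp only [hcdef]; ring
  have hterm : ∀ m : ℕ, ‖∫ ζ, c m * (u (r • ζ) * (inner ℝ η ζ) ^ m) ∂(sphMeasure n)‖ ≤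
      K * L.factorial * (((m + L).choose L : ℕ) * q ^ m) := by
    intro m
    rw [integral_const_mul, norm_mul, Real.norm_of_nonneg (hc0 m)]
    have h1 : ((m + (n - 2)).choose (n - 2) : ℝ) ≤ ((m : ℝ) + 1) ^ (n - 2) := by
      exact_mod_cast choose_le_pow m (n - 2)
    have h2 : ((m : ℝ) + 1) ^ L ≤ L.factorial * ((m + L).choose L : ℕ) := by
      exact_mod_cast pow_le_choose m L
    have h3 : c m ≤ ((m : ℝ) + 1) ^ (n - 2) * q ^ m := by
      calc c m ≤ 1 * (((m : ℝ) + 1) ^ (n - 2) * q ^ m) := by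
            simp only [hcdef]; gcongr
        _ = _ := one_mul _
    calc _ ≤ ((m : ℝ) + 1) ^ (n - 2) * q ^ m * (K * (1 + (m : ℝ)) ^ K) :=
          mul_le_mul h3 (hK η hη m) (abs_nonneg _) (by positivity)
      _ = K * q ^ m * ((m : ℝ) + 1) ^ L := by rw [hL, pow_add]; ring
      _ ≤ K * q ^ m * (L.factorial * ((m + L).choose L : ℕ)) := by gcongr
      _ = _ := by ring
  have hgeo := (hasSum_choose_mul_geometric_of_norm_lt_one L
      (by rwa [Real.norm_of_nonneg q0.le] : ‖q‖ < 1)).mul_left ((K : ℝ) * L.factorial)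
  have hfin := tsum_of_norm_bounded hgeo hterm
  rw [hsum.tsum_eq, Real.norm_eq_abs] at hfin
  refine hfin.trans ?_
  rw [mul_assoc (K * L.factorial : ℝ)]
  refine mul_le_mul_of_nonneg_left ?_ (by positivity)
  have h1q : (1 - s) ^ 2 / 2 ≤ 1 - q := by
    have e : 1 - q = (1 - s) ^ 2 / (1 + s ^ 2) := by rw [hq]; field_simp; ring
    rw [e]
    gcongr
    nlinarith
  have hp : 0 < (1 - s) ^ 2 / 2 := by
    have : 0 < 1 - s := by linarith
    positivity
  calc 1 / (1 - q) ^ (L + 1) ≤ 1 / ((1 - s) ^ 2 / 2) ^ (L + 1) := by gcongr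
    _ = _ := by rw [div_pow, ← pow_mul, one_div_div]; rfl

/-- A boundary distribution forces polynomial growth. -/
lemma growth_of_hasBoundaryDistribution (hn : 3 ≤ n) (hu : ContDiffOn ℝ 2 u (ball (0 : E n) 1))
    (hH : HHarmonic n u) (hbd : HasBoundaryDistribution n u) :
    ∃ C A : ℝ, 0 < C ∧ 0 < A ∧ ∀ x ∈ ball (0 : E n) 1, |u x| ≤ C * (1 - ‖x‖) ^ (-A) := by
  obtain ⟨K, hK⟩ := moment_growth hn hu hbd
  set D : ℝ := K * (K + (n - 2)).factorial * 2 ^ (K + (n - 2) + 1) with hD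
  have hD0 : 0 ≤ D := by positivity
  refine ⟨D + |u 0| + 1, (2 * (K + (n - 2) + 1) : ℕ), by positivity, by positivity, fun x hx => ?_⟩
  rw [mem_ball_zero_iff] at hx
  rw [Real.rpow_neg (by linarith), Real.rpow_natCast]
  have hpos : 0 < 1 - ‖x‖ := by linarith
  set P := ((1 - ‖x‖) ^ (2 * (K + (n - 2) + 1)))⁻¹ with hP
  have hP1 : 1 ≤ P :=
    one_le_inv_iff₀.2 ⟨by positivity, pow_le_one₀ hpos.le (by linarith [norm_nonneg x])⟩
  rcases eq_or_ne x 0 with rfl | h0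
  · nlinarith [abs_nonneg (u 0)]
  · have hnx : 0 < ‖x‖ := norm_pos_iff.2 h0
    have hξ : ‖x‖⁻¹ • x ∈ sphere (0 : E n) 1 := by
      rw [mem_sphere_zero_iff_norm, norm_smul, norm_inv, norm_norm, inv_mul_cancel₀ hnx.ne']
    have hmain := pointwise_bound hn hu hH hbd (s := ‖x‖) (B := D * P) ⟨hnx, hx⟩ (by positivity)
      (by
        have hlt : 1 - 1 / ((K : ℝ) + 2) < 1 := by
          have : 0 < 1 / ((K : ℝ) + 2) := by positivity
          linarith
        have hge : 0 ≤ 1 - 1 / ((K : ℝ) + 2) := by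
          rw [sub_nonneg, div_le_one (by positivity)]; linarith [Nat.cast_nonneg (α := ℝ) K]
        filter_upwards [Ioo_mem_nhdsLT hlt] with r hr η hη
        exact pairing_bound hn hu ⟨by linarith [hr.1], hr.2⟩ (fun ξ hξ m => hK ξ hξ m r hr)
          ⟨hnx, hx⟩ hη) hξ
    rw [smul_smul, mul_inv_cancel₀ hnx.ne', one_smul] at hmain
    nlinarith [abs_nonneg (u 0)]

end

end HH

/-- An `H`-harmonic function `u` on `B_n` has a boundary distribution iff it
satisfies a growth estimate `|u(x)| ≤ C(1-|x|)^{-A}` on `B_n`. -/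
theorem stmt6 (n : ℕ) (hn : 3 ≤ n) (u : E n → ℝ)
    (hu : ContDiffOn ℝ 2 u (ball (0 : E n) 1)) (hH : HHarmonic n u) :
    HasBoundaryDistribution n u ↔
      ∃ C A : ℝ, 0 < C ∧ 0 < A ∧ ∀ x ∈ ball (0 : E n) 1, |u x| ≤ C * (1 - ‖x‖) ^ (-A) :=
  ⟨HH.growth_of_hasBoundaryDistribution hn hu hH, fun ⟨_, _, _, _, hg⟩ =>
    HH.hasBoundaryDistribution_of_growth hn hu hH hg⟩
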